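/- arXiv:math/0504137 — 5 statements merged into one kernel-verified Lean document; each statement's English description precedes it below -/
import Mathlib

section
/- Let Ω, Ω' be bounded open subsets of ℝⁿ with smooth boundary, uniformly strictly c-convex (respectively c*-convex) with respect to each other, and let c satisfy conditions A0, A1, A2. Suppose condition Aw is violated, i.e., there exist (x₀,y₀) ∈ Ω×Ω' and orthogonal vectors ξ, ν ∈ ℝⁿ with 𝔖_c(x₀,y₀)(ξ,ν) < 0. Then there exist probability measures μ₀ on cl(Ω) and μ₁ on cl(Ω'), each having a C^∞ strictly positive density with respect to Lebesgue measure, such that there exists no C¹ c-convex potential φ on Ω with G_{φ#}μ₀ = μ₁. -/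
open Set Filter Topology MeasureTheory Metric Bornology
open scoped RealInnerProductSpace ENNReal NNReal Topology

noncomputable section

/-- Euclidean space ℝⁿ. -/
abbrev Euc (n : ℕ) := EuclideanSpace ℝ (Fin n)

variable {n : ℕ}

/-- Gradient of the cost in the first variable: ∇ₓc(x,y). -/
noncomputable def gradx (c : Euc n → Euc n → ℝ) (x y : Euc n) : Euc n :=
  gradient (fun x' => c x' y) x

/-- Gradient of the cost in the second variable: ∇_y c(x,y). -/
noncomputable def grady (c : Euc n → Euc n → ℝ) (x y : Euc n) : Euc n :=
  gradient (fun y' => c x y') y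

/-- Condition A0: the cost is C⁴ on a neighborhood of cl(Ω) × cl(Ω'). -/
def CondA0 (c : Euc n → Euc n → ℝ) (Ω Ω' : Set (Euc n)) : Prop :=
  ∃ U : Set (Euc n × Euc n), IsOpen U ∧ closure Ω ×ˢ closure Ω' ⊆ U ∧
    ContDiffOn ℝ 4 (fun p => c p.1 p.2) U

/-- Condition A1: for every x ∈ cl(Ω), y ↦ −∇ₓc(x,y) is injective on cl(Ω') with convex image. -/
def CondA1 (c : Euc n → Euc n → ℝ) (Ω Ω' : Set (Euc n)) : Prop :=
  ∀ x ∈ closure Ω, Set.InjOn (fun y => -gradx c x y) (closure Ω') ∧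
    Convex ℝ ((fun y => -gradx c x y) '' closure Ω')

/-- Condition A2: det D²ₓᵧ c (x,y) ≠ 0 on cl(Ω) × cl(Ω'). -/
def CondA2 (c : Euc n → Euc n → ℝ) (Ω Ω' : Set (Euc n)) : Prop :=
  ∀ x ∈ closure Ω, ∀ y ∈ closure Ω',
    LinearMap.det ((fderiv ℝ (fun y' => gradx c x y') y : Euc n →L[ℝ] Euc n) :
      Euc n →ₗ[ℝ] Euc n) ≠ 0

/-- c-transform φᶜ(y) = sup_{x ∈ Ω} (−c(x,y) − φ(x)). -/
def ctransform (c : Euc n → Euc n → ℝ) (Ω : Set (Euc n)) (φ : Euc n → ℝ) (y : Euc n) : ℝ :=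
  sSup ((fun x => -c x y - φ x) '' Ω)

/-- c*-transform ψᶜ*(x) = sup_{y ∈ Ω'} (−c(x,y) − ψ(y)). -/
def cstarTransform (c : Euc n → Euc n → ℝ) (Ω' : Set (Euc n)) (ψ : Euc n → ℝ) (x : Euc n) : ℝ :=
  sSup ((fun y => -c x y - ψ y) '' Ω')

/-- φ is c-convex on Ω: it is the c*-transform of some lower semicontinuous ψ on Ω'. -/
def CConvexOn (c : Euc n → Euc n → ℝ) (Ω Ω' : Set (Euc n)) (φ : Euc n → ℝ) : Prop :=
  ∃ ψ : Euc n → ℝ, LowerSemicontinuousOn ψ Ω' ∧ ∀ x ∈ Ω, φ x = cstarTransform c Ω' ψ x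

/-- The contact set G_φ(x) = { y ∈ Ω' : φ(x) + φᶜ(y) = −c(x,y) }. -/
def contactSet (c : Euc n → Euc n → ℝ) (Ω Ω' : Set (Euc n)) (φ : Euc n → ℝ) (x : Euc n) :
    Set (Euc n) :=
  {y | y ∈ Ω' ∧ φ x + ctransform c Ω φ y = -c x y}

/-- The subdifferential ∂φ(x) (relative to Ω): p with φ(x') ≥ φ(x) + p·(x'−x) + o(|x'−x|). -/
def subdiff (Ω : Set (Euc n)) (φ : Euc n → ℝ) (x : Euc n) : Set (Euc n) :=
  {p | ∀ ε > (0:ℝ), ∀ᶠ x' in 𝓝[Ω] x, φ x + ⟪p, x' - x⟫ - ε * ‖x' - x‖ ≤ φ x'}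

/-- The c-subdifferential ∂ᶜφ(x) = { −∇ₓc(x,y) : y ∈ G_φ(x) }. -/
def csubdiff (c : Euc n → Euc n → ℝ) (Ω Ω' : Set (Euc n)) (φ : Euc n → ℝ) (x : Euc n) :
    Set (Euc n) :=
  (fun y => -gradx c x y) '' contactSet c Ω Ω' φ x

/-- S is c-convex with respect to the point x: −∇ₓc(x,S) is convex. -/
def CConvexSetWrt (c : Euc n → Euc n → ℝ) (x : Euc n) (S : Set (Euc n)) : Prop :=
  Convex ℝ ((fun y => -gradx c x y) '' S)

/-- S is c-convex with respect to the set Ω. -/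
def CConvexSet (c : Euc n → Euc n → ℝ) (Ω S : Set (Euc n)) : Prop :=
  ∀ x ∈ Ω, CConvexSetWrt c x S

/-- T is a c-exponential map for c on Ω × Ω': T x (−∇ₓc(x,y)) = y. -/
def IsCExp (c : Euc n → Euc n → ℝ) (Ω Ω' : Set (Euc n)) (T : Euc n → Euc n → Euc n) : Prop :=
  ∀ x ∈ Ω, ∀ y ∈ Ω', T x (-gradx c x y) = y

/-- The point y_θ of the c-segment [y₀,y₁]ₓ with respect to x. -/
def cseg (c : Euc n → Euc n → ℝ) (T : Euc n → Euc n → Euc n) (x y₀ y₁ : Euc n) (θ : ℝ) :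
    Euc n :=
  T x ((1 - θ) • (-gradx c x y₀) + θ • (-gradx c x y₁))

/-- The cost-sectional curvature 𝔖_c(x₀,y₀)(ξ,ν). -/
def costSecCurv (c : Euc n → Euc n → ℝ) (T : Euc n → Euc n → Euc n) (x₀ y₀ ξ ν : Euc n) : ℝ :=
  iteratedDeriv 2 (fun s : ℝ => iteratedDeriv 2
    (fun t : ℝ => -c (x₀ + t • ξ) (T x₀ (-gradx c x₀ y₀ + s • ν))) (0:ℝ)) (0:ℝ)

/-- Condition As (with constant C₀; C₀ = 0 gives condition Aw). -/
def CondAs (c : Euc n → Euc n → ℝ) (T : Euc n → Euc n → Euc n) (Ω Ω' : Set (Euc n))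
    (C₀ : ℝ) : Prop :=
  ∀ x ∈ Ω, ∀ y ∈ Ω', ∀ ξ ν : Euc n, ⟪ξ, ν⟫ = 0 →
    C₀ * ‖ξ‖ ^ 2 * ‖ν‖ ^ 2 ≤ costSecCurv c T x y ξ ν

/-- G_{φ#}μ₀ = μ₁ : some Borel selection of G_φ pushes μ₀ forward to μ₁. -/
def GradPush (c : Euc n → Euc n → ℝ) (Ω Ω' : Set (Euc n)) (φ : Euc n → ℝ)
    (μ₀ μ₁ : Measure (Euc n)) : Prop :=
  ∃ Tm : Euc n → Euc n, Measurable Tm ∧ (∀ᵐ x ∂μ₀, Tm x ∈ contactSet c Ω Ω' φ x) ∧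
    μ₀.map Tm = μ₁

/-- Ω' is uniformly strictly c-convex with respect to Ω. -/
def UnifStrictCConvex (c : Euc n → Euc n → ℝ) (Ω Ω' : Set (Euc n)) : Prop :=
  ∃ δ > (0:ℝ), ∀ x ∈ Ω, ∀ p ∈ (fun y => -gradx c x y) '' Ω',
    ∀ q ∈ (fun y => -gradx c x y) '' Ω',
      closedBall (midpoint ℝ p q) (δ * ‖p - q‖ ^ 2) ⊆ (fun y => -gradx c x y) '' Ω'

/-- Ω is uniformly strictly c*-convex with respect to Ω' (the dual statement). -/
def UnifStrictCstarConvex (c : Euc n → Euc n → ℝ) (Ω Ω' : Set (Euc n)) : Prop :=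
  ∃ δ > (0:ℝ), ∀ y ∈ Ω', ∀ p ∈ (fun x => -grady c x y) '' Ω,
    ∀ q ∈ (fun x => -grady c x y) '' Ω,
      closedBall (midpoint ℝ p q) (δ * ‖p - q‖ ^ 2) ⊆ (fun x => -grady c x y) '' Ω

/-- Ω has smooth boundary: it is the sublevel set of a smooth function with
nonvanishing gradient on the boundary. -/
def SmoothBoundary (Ω : Set (Euc n)) : Prop :=
  ∃ f : Euc n → ℝ, ContDiff ℝ (⊤ : ℕ∞) f ∧ Ω = f ⁻¹' Iio 0 ∧ ∀ x ∈ frontier Ω, gradient f x ≠ 0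

end

/-- Probability measure with smooth positive density, mostly concentrated near two points. -/
lemma exists_conc {n : ℕ} (Ω : Set (Euc n)) (hΩb : IsBounded Ω)
    (a b : Euc n) (δ : ℝ) (hδ : 0 < δ) (ha : ball a δ ⊆ Ω) (hb : ball b δ ⊆ Ω)
    (u v w : ℝ) (hu : 0 < u) (hv : 0 < v) (hw : 0 < w) (huvw : u + v + w = 1) :
    ∃ (μ : Measure (Euc n)) (ρ : Euc n → ℝ), IsProbabilityMeasure μ ∧
      ContDiff ℝ (⊤ : ℕ∞) ρ ∧ (∀ x, 0 < ρ x) ∧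
      μ = (volume.restrict (closure Ω)).withDensity (fun x => ENNReal.ofReal (ρ x)) ∧
      ENNReal.ofReal u ≤ μ (ball a δ) ∧ ENNReal.ofReal v ≤ μ (ball b δ) ∧
      ENNReal.ofReal (u + v) ≤ μ (ball a δ ∪ ball b δ) := by
  have hK : IsCompact (closure Ω) := hΩb.isCompact_closure
  have hane : (closure Ω).Nonempty := ⟨a, subset_closure (ha (mem_ball_self hδ))⟩
  have hVpos : 0 < volume.real (closure Ω) := by
    have h1 : 0 < volume (closure Ω) :=
      lt_of_lt_of_le (measure_ball_pos volume a hδ) (measure_mono (ha.trans subset_closure))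
    exact ENNReal.toReal_pos h1.ne' hK.measure_lt_top.ne
  set V := volume.real (closure Ω) with hV
  let fa : ContDiffBump a := ⟨δ / 2, δ, by positivity, by linarith⟩
  let fb : ContDiffBump b := ⟨δ / 2, δ, by positivity, by linarith⟩
  let ga : Euc n → ℝ := fa.normed volume
  let gb : Euc n → ℝ := fb.normed volume
  have hga0 : ∀ x, 0 ≤ ga x := fun x => fa.nonneg_normed x
  have hgb0 : ∀ x, 0 ≤ gb x := fun x => fb.nonneg_normed x
  have hga1 : ∫ x, ga x = 1 := fa.integral_normed
  have hgb1 : ∫ x, gb x = 1 := fb.integral_normed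
  have hgas : Function.support ga = ball a δ := fa.support_normed_eq
  have hgbs : Function.support gb = ball b δ := fb.support_normed_eq
  have hgai : Integrable ga := fa.integrable_normed
  have hgbi : Integrable gb := fb.integrable_normed
  let ρ : Euc n → ℝ := fun x => u * ga x + v * gb x + w / V
  have hρpos : ∀ x, 0 < ρ x := fun x => by
    have := hga0 x; have := hgb0 x; have : 0 < w / V := by positivity
    have := mul_nonneg hu.le (hga0 x); have := mul_nonneg hv.le (hgb0 x)
    simp only [ρ]; linarith
  have hρs : ContDiff ℝ (⊤ : ℕ∞) ρ :=
    ((contDiff_const.mul fa.contDiff_normed).add (contDiff_const.mul fb.contDiff_normed)).add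
      contDiff_const
  have hsa : ∀ S : Set (Euc n), ball a δ ⊆ S → ∫ x in S, ga x = 1 := by
    intro S hS
    rw [setIntegral_eq_integral_of_forall_compl_eq_zero, hga1]
    intro x hx
    by_contra h
    exact hx (hS (hgas ▸ Function.mem_support.2 h))
  have hsb : ∀ S : Set (Euc n), ball b δ ⊆ S → ∫ x in S, gb x = 1 := by
    intro S hS
    rw [setIntegral_eq_integral_of_forall_compl_eq_zero, hgb1]
    intro x hx
    by_contra h
    exact hx (hS (hgbs ▸ Function.mem_support.2 h))
  have hρi : ∀ S : Set (Euc n), S ⊆ closure Ω → IntegrableOn ρ S := by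
    intro S hS
    exact (hρs.continuous.continuousOn.integrableOn_compact hK).mono_set hS
  have hci : ∀ S : Set (Euc n), S ⊆ closure Ω → IntegrableOn (fun _ => w / V) S := by
    intro S hS
    exact (continuous_const.continuousOn.integrableOn_compact hK).mono_set hS
  let μ : Measure (Euc n) :=
    (volume.restrict (closure Ω)).withDensity (fun x => ENNReal.ofReal (ρ x))
  have hμS : ∀ S : Set (Euc n), MeasurableSet S → S ⊆ closure Ω →
      μ S = ENNReal.ofReal (∫ x in S, ρ x) := by
    intro S hS hSΩ
    simp only [μ]
    rw [withDensity_apply _ hS, Measure.restrict_restrict hS, inter_eq_left.2 hSΩ,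
      ofReal_integral_eq_lintegral_ofReal (hρi S hSΩ) (ae_of_all _ fun x => (hρpos x).le)]
  have hexp : ∀ S : Set (Euc n), S ⊆ closure Ω → ∫ x in S, ρ x =
      u * (∫ x in S, ga x) + v * (∫ x in S, gb x) + ∫ x in S, w / V := by
    intro S hS
    simp only [ρ]
    rw [integral_add, integral_add, integral_const_mul, integral_const_mul]
    · exact hgai.integrableOn.const_mul u
    · exact hgbi.integrableOn.const_mul v
    · exact (hgai.integrableOn.const_mul u).add (hgbi.integrableOn.const_mul v)
    · exact hci S hS
  have hn1 : ∀ S : Set (Euc n), 0 ≤ ∫ x in S, ga x := fun S => integral_nonneg hga0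
  have hn2 : ∀ S : Set (Euc n), 0 ≤ ∫ x in S, gb x := fun S => integral_nonneg hgb0
  have hn3 : ∀ S : Set (Euc n), 0 ≤ ∫ x in S, w / V := fun S =>
    integral_nonneg fun _ => by positivity
  have haΩ := ha.trans subset_closure
  have hbΩ := hb.trans subset_closure
  refine ⟨μ, ρ, ⟨?_⟩, hρs, hρpos, rfl, ?_, ?_, ?_⟩
  · have hout : μ univ = μ (closure Ω) := by
      simp only [μ]
      rw [withDensity_apply _ MeasurableSet.univ, withDensity_apply _ isClosed_closure.measurableSet,
        Measure.restrict_univ, Measure.restrict_restrict isClosed_closure.measurableSet, inter_self]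
    rw [hout, hμS _ isClosed_closure.measurableSet subset_rfl, hexp _ subset_rfl,
      hsa _ haΩ, hsb _ hbΩ]
    have : ∫ x in closure Ω, w / V = w := by
      rw [setIntegral_const, smul_eq_mul, ← hV]; field_simp
    rw [this]; simp [huvw]
  · rw [hμS _ measurableSet_ball haΩ, hexp _ haΩ, hsa _ subset_rfl]
    apply ENNReal.ofReal_le_ofReal
    have := mul_nonneg hv.le (hn2 (ball a δ)); have := hn3 (ball a δ); linarith
  · rw [hμS _ measurableSet_ball hbΩ, hexp _ hbΩ, hsb _ subset_rfl]
    apply ENNReal.ofReal_le_ofReal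
    have := mul_nonneg hu.le (hn1 (ball b δ)); have := hn3 (ball b δ); linarith
  · rw [hμS _ (measurableSet_ball.union measurableSet_ball) (union_subset haΩ hbΩ),
      hexp _ (union_subset haΩ hbΩ), hsa _ subset_union_left, hsb _ subset_union_right]
    apply ENNReal.ofReal_le_ofReal
    have := hn3 (ball a δ ∪ ball b δ); linarith

/-- Counting lemma: large source set and large target set meet along the transport map. -/
lemma exists_good {n : ℕ} (μ₀ μ₁ : Measure (Euc n)) [IsProbabilityMeasure μ₀]
    (Tm : Euc n → Euc n) (hTm : Measurable Tm) (hmap : μ₀.map Tm = μ₁)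
    (P : Euc n → Prop) (hP : ∀ᵐ x ∂μ₀, P x) (A B : Set (Euc n))
    (hB : MeasurableSet B)
    (u v : ℝ) (hu : 0 ≤ u) (hv : 0 ≤ v) (huv : 1 < u + v)
    (hAu : ENNReal.ofReal u ≤ μ₀ A) (hBv : ENNReal.ofReal v ≤ μ₁ B) :
    ∃ x ∈ A, Tm x ∈ B ∧ P x := by
  by_contra hcon
  push Not at hcon
  have h1 : μ₁ B = μ₀ (Tm ⁻¹' B) := by rw [← hmap, Measure.map_apply hTm hB]
  have h2 : μ₀ (A ∩ Tm ⁻¹' B) = 0 := by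
    refine measure_mono_null ?_ (ae_iff.1 hP)
    intro x hx
    exact hcon x hx.1 hx.2
  have h3 : μ₀ (A ∪ Tm ⁻¹' B) + μ₀ (A ∩ Tm ⁻¹' B) = μ₀ A + μ₀ (Tm ⁻¹' B) :=
    measure_union_add_inter A (hTm hB)
  rw [h2, add_zero, ← h1] at h3
  have h4 : μ₀ A + μ₁ B ≤ 1 := h3 ▸ prob_le_one
  have h5 : ENNReal.ofReal (u + v) ≤ 1 := by
    rw [ENNReal.ofReal_add hu hv]; exact (add_le_add hAu hBv).trans h4
  rw [ENNReal.ofReal_le_one] at h5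
  linarith

/-- The joint cost function on the product. -/
abbrev cU {n : ℕ} (c : Euc n → Euc n → ℝ) : Euc n × Euc n → ℝ := fun p => c p.1 p.2

lemma cU_contDiffAt {n : ℕ} {c : Euc n → Euc n → ℝ} {Ω Ω' : Set (Euc n)} (hA0 : CondA0 c Ω Ω')
    {x y : Euc n} (hx : x ∈ closure Ω) (hy : y ∈ closure Ω') : ContDiffAt ℝ 4 (cU c) (x, y) := by
  obtain ⟨U, hU, hsub, hc⟩ := hA0
  exact hc.contDiffAt (hU.mem_nhds (hsub ⟨hx, hy⟩))

lemma c_hasFDerivAt_fst {n : ℕ} {c : Euc n → Euc n → ℝ} {x y : Euc n}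
    (h : ContDiffAt ℝ 4 (cU c) (x, y)) :
    HasFDerivAt (fun x' => c x' y)
      ((fderiv ℝ (cU c) (x, y)).comp (ContinuousLinearMap.inl ℝ (Euc n) (Euc n))) x := by
  have h1 : HasFDerivAt (cU c) (fderiv ℝ (cU c) (x, y)) (x, y) :=
    (h.differentiableAt (by norm_num)).hasFDerivAt
  have h2 : HasFDerivAt (fun x' : Euc n => (x', y)) (ContinuousLinearMap.inl ℝ (Euc n) (Euc n)) x :=
    hasFDerivAt_prodMk_left x y
  exact HasFDerivAt.comp x h1 h2

lemma gradx_eq {n : ℕ} {c : Euc n → Euc n → ℝ} {x y : Euc n}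
    (h : ContDiffAt ℝ 4 (cU c) (x, y)) :
    gradx c x y = (InnerProductSpace.toDual ℝ (Euc n)).symm
      ((fderiv ℝ (cU c) (x, y)).comp (ContinuousLinearMap.inl ℝ (Euc n) (Euc n))) := by
  rw [gradx, gradient, (c_hasFDerivAt_fst h).fderiv]

lemma inner_gradx {n : ℕ} {c : Euc n → Euc n → ℝ} {x y : Euc n}
    (h : ContDiffAt ℝ 4 (cU c) (x, y)) (v : Euc n) :
    ⟪gradx c x y, v⟫ = fderiv ℝ (cU c) (x, y) (v, 0) := by
  rw [gradx_eq h, InnerProductSpace.toDual_symm_apply]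
  simp

lemma hasGradientAt_fst {n : ℕ} {c : Euc n → Euc n → ℝ} {x y : Euc n}
    (h : ContDiffAt ℝ 4 (cU c) (x, y)) :
    HasGradientAt (fun x' => c x' y) (gradx c x y) x :=
  (c_hasFDerivAt_fst h).differentiableAt.hasGradientAt

lemma gradx_contDiffAt {n : ℕ} {c : Euc n → Euc n → ℝ} {x y : Euc n}
    (h : ContDiffAt ℝ 4 (cU c) (x, y)) :
    ContDiffAt ℝ 3 (fun p : Euc n × Euc n => gradx c p.1 p.2) (x, y) := by
  have h1 : ContDiffAt ℝ 3 (fderiv ℝ (cU c)) (x, y) := h.fderiv_right (by norm_num)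
  have h2 : ContDiffAt ℝ 3 (fun p : Euc n × Euc n => (InnerProductSpace.toDual ℝ (Euc n)).symm
      ((fderiv ℝ (cU c) p).comp (ContinuousLinearMap.inl ℝ (Euc n) (Euc n)))) (x, y) := by
    have h3 := h1.clm_comp (contDiffAt_const (c := ContinuousLinearMap.inl ℝ (Euc n) (Euc n)))
    exact (InnerProductSpace.toDual ℝ (Euc n)).symm.toContinuousLinearEquiv.contDiff.contDiffAt.comp
      (x, y) h3
  refine h2.congr_of_eventuallyEq ?_
  filter_upwards [h.eventually (by simp)] with p hp
  exact gradx_eq (c := c) (x := p.1) (y := p.2) hp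

lemma gradx_contDiffAt_snd {n : ℕ} {c : Euc n → Euc n → ℝ} {x y : Euc n}
    (h : ContDiffAt ℝ 4 (cU c) (x, y)) :
    ContDiffAt ℝ 3 (fun y' => gradx c x y') y := by
  have h1 := gradx_contDiffAt h
  have h2 : ContDiffAt ℝ 3 (fun y' : Euc n => (x, y')) y := contDiffAt_const.prodMk contDiffAt_id
  exact ContDiffAt.comp (f := fun y' : Euc n => (x, y')) y h1 h2

/-- The c-exponential map is smooth and is locally a right inverse. -/
lemma cexp_local {n : ℕ} {c : Euc n → Euc n → ℝ} {Ω Ω' : Set (Euc n)}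
    {T : Euc n → Euc n → Euc n} (hΩ'o : IsOpen Ω') (hA0 : CondA0 c Ω Ω')
    (hA2 : CondA2 c Ω Ω') (hT : IsCExp c Ω Ω' T) {x₀ y₀ : Euc n} (hx : x₀ ∈ Ω) (hy : y₀ ∈ Ω') :
    ContDiffAt ℝ 3 (T x₀) (-gradx c x₀ y₀) ∧
    ∀ᶠ p in 𝓝 (-gradx c x₀ y₀), T x₀ p ∈ Ω' ∧ -gradx c x₀ (T x₀ p) = p := by
  have hc := cU_contDiffAt hA0 (subset_closure hx) (subset_closure hy)
  have hg := gradx_contDiffAt_snd hc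
  have hdet := hA2 x₀ (subset_closure hx) y₀ (subset_closure hy)
  set A : Euc n →L[ℝ] Euc n := fderiv ℝ (fun y' => gradx c x₀ y') y₀ with hAdef
  let e : Euc n ≃L[ℝ] Euc n :=
    (LinearEquiv.ofIsUnitDet (f := (-A : Euc n →L[ℝ] Euc n).toLinearMap) (v := (stdOrthonormalBasis ℝ (Euc n)).toBasis) (v' := (stdOrthonormalBasis ℝ (Euc n)).toBasis) (by
      rw [LinearMap.det_toMatrix]
      have : ((-A : Euc n →L[ℝ] Euc n) : Euc n →ₗ[ℝ] Euc n) = (-1 : ℝ) • (A : Euc n →ₗ[ℝ] Euc n) := by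
        ext; simp
      rw [this, LinearMap.det_smul]
      exact (mul_ne_zero (by simp) hdet).isUnit)).toContinuousLinearEquiv
  have he : (e : Euc n →L[ℝ] Euc n) = -A := by
    ext v; rfl
  have hf : ContDiffAt ℝ 3 (fun y => -gradx c x₀ y) y₀ := hg.neg
  have hf' : HasFDerivAt (fun y => -gradx c x₀ y) (e : Euc n →L[ℝ] Euc n) y₀ := by
    rw [he]
    exact ((hg.differentiableAt (by norm_num)).hasFDerivAt).neg
  have hs : HasStrictFDerivAt (fun y => -gradx c x₀ y) (e : Euc n →L[ℝ] Euc n) y₀ :=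
    hf.hasStrictFDerivAt' hf' (by norm_num)
  have hleft : ∀ᶠ y in 𝓝 y₀, T x₀ (-gradx c x₀ y) = y := by
    filter_upwards [hΩ'o.mem_nhds hy] with y hy'
    exact hT x₀ hx y hy'
  have huniq := hs.localInverse_unique hleft
  constructor
  · exact (hf.to_localInverse hf' (by norm_num)).congr_of_eventuallyEq huniq
  · have h1 := hs.eventually_right_inverse
    have h2 := hs.localInverse_tendsto.eventually (hΩ'o.mem_nhds hy)
    filter_upwards [huniq, h1, h2] with p h3 h4 h5
    rw [h3]
    exact ⟨h5, h4⟩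

/-- Strict second derivative test. -/
lemma strict_max_test {f : ℝ → ℝ} (hd : ∀ᶠ s in 𝓝 (0:ℝ), DifferentiableAt ℝ f s)
    (h1 : deriv f 0 = 0) (h2 : deriv (deriv f) 0 < 0) : ∀ᶠ s in 𝓝[≠] (0:ℝ), f s < f 0 := by
  set d := deriv (deriv f) 0 with hdd
  set m := -d / 4 with hm
  have hdd' : DifferentiableAt ℝ (deriv f) 0 := differentiableAt_of_deriv_ne_zero h2.ne
  let g : ℝ → ℝ := fun s => f s + m * s ^ 2
  have hq : ∀ s : ℝ, HasDerivAt (fun s : ℝ => m * s ^ 2) (m * (2 * s)) s := fun s => by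
    simpa using (hasDerivAt_pow 2 s).const_mul m
  have hg : deriv g =ᶠ[𝓝 0] fun s => deriv f s + m * (2 * s) := by
    filter_upwards [hd] with s hs
    exact (hs.hasDerivAt.add (hq s)).deriv
  have hg0 : deriv g 0 = 0 := by
    rw [hg.self_of_nhds]; simp [h1]
  have hgg : deriv (deriv g) 0 < 0 := by
    rw [hg.deriv_eq]
    have : HasDerivAt (fun s => deriv f s + m * (2 * s)) (d + m * (2 * 1)) 0 :=
      hdd'.hasDerivAt.add (((hasDerivAt_id (0:ℝ)).const_mul 2).const_mul m)
    rw [this.deriv]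
    linarith
  have hgc : ContinuousAt g 0 :=
    hd.self_of_nhds.continuousAt.add (hq 0).continuousAt
  have hmax := isLocalMax_of_deriv_deriv_neg hgg hg0 hgc
  filter_upwards [nhdsWithin_le_nhds hmax, self_mem_nhdsWithin] with s hs hs0
  have h3 : f s + m * s ^ 2 ≤ f 0 + m * 0 ^ 2 := hs
  have hs0' : s ≠ 0 := hs0
  have : 0 < m * s ^ 2 := mul_pos (by linarith) (by positivity)
  linarith

/-- Second derivative of the cost in the first variable. -/
noncomputable def Qxx {n : ℕ} (c : Euc n → Euc n → ℝ) (x₀ ξ y : Euc n) : ℝ :=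
  fderiv ℝ (fderiv ℝ (cU c)) (x₀, y) (ξ, 0) (ξ, 0)

lemma curve_derivs {n : ℕ} {c : Euc n → Euc n → ℝ} {x₀ y : Euc n}
    (h : ContDiffAt ℝ 4 (cU c) (x₀, y)) (ξ η : Euc n) :
    (∀ᶠ t in 𝓝 (0:ℝ), DifferentiableAt ℝ (fun t : ℝ => c (x₀ + t • ξ + t ^ 2 • η) y) t) ∧
    deriv (fun t : ℝ => c (x₀ + t • ξ + t ^ 2 • η) y) 0 = ⟪gradx c x₀ y, ξ⟫ ∧
    HasDerivAt (deriv (fun t : ℝ => c (x₀ + t • ξ + t ^ 2 • η) y))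
      (Qxx c x₀ ξ y + 2 * ⟪gradx c x₀ y, η⟫) 0 := by
  let γ : ℝ → Euc n × Euc n := fun t => (x₀ + t • ξ + t ^ 2 • η, y)
  let γ' : ℝ → Euc n × Euc n := fun t => (ξ + (2 * t) • η, 0)
  have hγ : ∀ t, HasDerivAt γ (γ' t) t := by
    intro t
    have h1 : HasDerivAt (fun t : ℝ => x₀ + t • ξ + t ^ 2 • η) (ξ + (2 * t) • η) t := by
      have h2 : HasDerivAt (fun t : ℝ => t • ξ) ((1:ℝ) • ξ) t := (hasDerivAt_id t).smul_const ξ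
      have h3 : HasDerivAt (fun t : ℝ => t ^ 2 • η) ((2 * t) • η) t := by
        have := (hasDerivAt_pow 2 t).smul_const η
        simpa using this
      have h4 := (h2.const_add x₀).add h3
      rw [one_smul] at h4
      exact h4
    exact h1.prodMk (hasDerivAt_const t y)
  have hγ0 : γ 0 = (x₀, y) := by simp [γ]
  have hγ'0 : γ' 0 = (ξ, 0) := by simp [γ']
  have hcont : Tendsto γ (𝓝 0) (𝓝 (x₀, y)) := by
    have := (hγ 0).continuousAt.tendsto
    rwa [hγ0] at this
  have hev : ∀ᶠ t in 𝓝 (0:ℝ), HasDerivAt (fun t : ℝ => c (x₀ + t • ξ + t ^ 2 • η) y)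
      (fderiv ℝ (cU c) (γ t) (γ' t)) t := by
    filter_upwards [hcont.eventually (h.eventually (by simp))] with t ht
    exact HasFDerivAt.comp_hasDerivAt t
      ((ht.differentiableAt (by norm_num)).hasFDerivAt) (hγ t)
  refine ⟨hev.mono fun t ht => ht.differentiableAt, ?_, ?_⟩
  · rw [hev.self_of_nhds.deriv, hγ0, hγ'0, inner_gradx h]
  · have heq : deriv (fun t : ℝ => c (x₀ + t • ξ + t ^ 2 • η) y) =ᶠ[𝓝 0]
        fun t => fderiv ℝ (cU c) (γ t) (γ' t) := hev.mono fun t ht => ht.deriv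
    refine HasDerivAt.congr_of_eventuallyEq ?_ heq
    have h1 : ContDiffAt ℝ 3 (fderiv ℝ (cU c)) (γ 0) := by
      rw [hγ0]; exact h.fderiv_right (by norm_num)
    have h2 : HasDerivAt (fun t => fderiv ℝ (cU c) (γ t))
        (fderiv ℝ (fderiv ℝ (cU c)) (γ 0) (γ' 0)) 0 :=
      HasFDerivAt.comp_hasDerivAt 0 ((h1.differentiableAt (by norm_num)).hasFDerivAt) (hγ 0)
    have h3 : HasDerivAt γ' ((2:ℝ) • η, 0) 0 := by
      have h4 : HasDerivAt (fun t : ℝ => ξ + (2 * t) • η) ((2:ℝ) • η) 0 := by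
        have := (((hasDerivAt_id (0:ℝ)).const_mul 2).smul_const η).const_add ξ
        simpa using this
      exact h4.prodMk (hasDerivAt_const 0 0)
    have h5 := h2.clm_apply h3
    refine h5.congr_deriv ?_
    rw [hγ0, hγ'0, Qxx, ← inner_gradx h, inner_smul_right]

lemma D_eq {n : ℕ} {c : Euc n → Euc n → ℝ} {x₀ y : Euc n}
    (h : ContDiffAt ℝ 4 (cU c) (x₀, y)) (ξ : Euc n) :
    iteratedDeriv 2 (fun t : ℝ => -c (x₀ + t • ξ) y) 0 = -Qxx c x₀ ξ y := by
  have h1 := (curve_derivs h ξ 0).2.2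
  simp only [smul_zero, add_zero, inner_zero_right, mul_zero] at h1
  rw [iteratedDeriv_succ, iteratedDeriv_one]
  have : deriv (fun t : ℝ => -c (x₀ + t • ξ) y) = fun t => -deriv (fun t : ℝ => c (x₀ + t • ξ) y) t := by
    ext t; exact deriv.fun_neg
  rw [this]
  exact h1.neg.deriv

/-- Failure of the maximum principle from negative cost-sectional curvature. -/
lemma partII {n : ℕ} {c : Euc n → Euc n → ℝ} {Ω Ω' : Set (Euc n)}
    {T : Euc n → Euc n → Euc n} (hΩo : IsOpen Ω) (hΩ'o : IsOpen Ω') (hA0 : CondA0 c Ω Ω')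
    (hA2 : CondA2 c Ω Ω') (hT : IsCExp c Ω Ω' T) {x₀ y₀ ξ ν : Euc n} (hx : x₀ ∈ Ω) (hy : y₀ ∈ Ω')
    (horth : ⟪ξ, ν⟫ = 0) (hneg : costSecCurv c T x₀ y₀ ξ ν < 0) :
    ∃ x₁ ∈ Ω, ∃ ya ∈ Ω', ∃ yb ∈ Ω',
      gradx c x₀ ya + gradx c x₀ yb = (2:ℝ) • gradx c x₀ y₀ ∧
      c x₀ ya - c x₁ ya < c x₀ y₀ - c x₁ y₀ ∧ c x₀ yb - c x₁ yb < c x₀ y₀ - c x₁ y₀ := by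
  obtain ⟨hTs, hTl⟩ := cexp_local hΩ'o hA0 hA2 hT hx hy
  have hc : ∀ y ∈ Ω', ContDiffAt ℝ 4 (cU c) (x₀, y) := fun y hy =>
    cU_contDiffAt hA0 (subset_closure hx) (subset_closure hy)
  set p₀ := -gradx c x₀ y₀ with hp₀
  let Y : ℝ → Euc n := fun s => T x₀ (p₀ + s • ν)
  have hline : ContDiffAt ℝ 3 (fun s : ℝ => p₀ + s • ν) 0 :=
    contDiffAt_const.add (contDiffAt_id.smul contDiffAt_const)
  have hline0 : p₀ + (0:ℝ) • ν = p₀ := by simp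
  have hY0 : Y 0 = y₀ := by
    simp only [Y]; rw [hline0]; exact hT x₀ hx y₀ hy
  have hYs : ContDiffAt ℝ 3 Y 0 := by
    refine ContDiffAt.comp (f := fun s : ℝ => p₀ + s • ν) (0:ℝ) ?_ hline
    rw [hline0]; exact hTs
  have hYl : ∀ᶠ s in 𝓝 (0:ℝ), Y s ∈ Ω' ∧ -gradx c x₀ (Y s) = p₀ + s • ν := by
    have := hline.continuousAt.tendsto
    rw [hline0] at this
    exact this.eventually hTl
  let D : ℝ → ℝ := fun s => -Qxx c x₀ ξ (Y s)
  have hDs : ContDiffAt ℝ 2 D 0 := by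
    have h1 : ContDiffAt ℝ 2 (fderiv ℝ (fderiv ℝ (cU c))) (x₀, Y 0) := by
      rw [hY0]
      exact ((hc y₀ hy).fderiv_right (m := 3) (by norm_num)).fderiv_right (by norm_num)
    have h2 : ContDiffAt ℝ 2 (fun s : ℝ => (x₀, Y s)) 0 :=
      contDiffAt_const.prodMk (hYs.of_le (by norm_num))
    have h3 : ContDiffAt ℝ 2 (fun s : ℝ => fderiv ℝ (fderiv ℝ (cU c)) (x₀, Y s)) 0 :=
      ContDiffAt.comp (f := fun s : ℝ => (x₀, Y s)) (0:ℝ) h1 h2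
    exact ((h3.clm_apply contDiffAt_const).clm_apply contDiffAt_const).neg
  have hDd : ∀ᶠ s in 𝓝 (0:ℝ), DifferentiableAt ℝ D s :=
    (hDs.eventually (by simp)).mono fun s hs => hs.differentiableAt (by norm_num)
  have hD2 : deriv (deriv D) 0 < 0 := by
    have h1 : (fun s : ℝ => iteratedDeriv 2
        (fun t : ℝ => -c (x₀ + t • ξ) (T x₀ (-gradx c x₀ y₀ + s • ν))) (0:ℝ)) =ᶠ[𝓝 0] D := by
      filter_upwards [hYl] with s hs
      exact D_eq (hc _ hs.1) ξ
    have h2 : costSecCurv c T x₀ y₀ ξ ν = iteratedDeriv 2 D 0 := h1.iteratedDeriv_eq 2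
    rw [h2, iteratedDeriv_succ, iteratedDeriv_one] at hneg
    exact hneg
  have hν : ν ≠ 0 := by
    rintro rfl
    have : D = fun _ => D 0 := by ext s; simp [D, Y]
    rw [this] at hD2
    simp at hD2
  have hνn : 0 < ‖ν‖ ^ 2 := by positivity
  let κ : ℝ := -(deriv D 0) / (2 * ‖ν‖ ^ 2)
  let E : ℝ → ℝ := fun s => D s + 2 * κ * ‖ν‖ ^ 2 * s
  have hEd : ∀ᶠ s in 𝓝 (0:ℝ), HasDerivAt E (deriv D s + 2 * κ * ‖ν‖ ^ 2) s := by
    filter_upwards [hDd] with s hs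
    have := hs.hasDerivAt.add ((hasDerivAt_id s).const_mul (2 * κ * ‖ν‖ ^ 2))
    rw [mul_one] at this
    exact this
  have hEe : deriv E =ᶠ[𝓝 0] fun s => deriv D s + 2 * κ * ‖ν‖ ^ 2 := hEd.mono fun s hs => hs.deriv
  have hE := strict_max_test (f := E) (hEd.mono fun s hs => hs.differentiableAt)
    (by
      rw [hEe.self_of_nhds]; simp only [κ]; field_simp; ring)
    (by
      rw [hEe.deriv_eq, deriv_add_const]; exact hD2)
  have hneg' : Tendsto (fun s : ℝ => -s) (𝓝[≠] 0) (𝓝[≠] 0) := by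
    refine tendsto_nhdsWithin_iff.2 ⟨?_, ?_⟩
    · have : Tendsto (fun s : ℝ => -s) (𝓝 0) (𝓝 (-0)) := continuous_neg.tendsto 0
      rw [neg_zero] at this
      exact this.mono_left nhdsWithin_le_nhds
    · filter_upwards [self_mem_nhdsWithin] with s hs
      simpa using hs
  have hall := hE.and (nhdsWithin_le_nhds (s := {(0:ℝ)}ᶜ) hYl)
  obtain ⟨s, ⟨hs1, hs2, hs3⟩, hs4, hs5, hs6⟩ := (hall.and (hneg'.eventually hall)).exists
  have key : ∀ σ : ℝ, E σ < E 0 → Y σ ∈ Ω' → -gradx c x₀ (Y σ) = p₀ + σ • ν →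
      ∀ᶠ t in 𝓝[≠] (0:ℝ), c x₀ (Y σ) - c (x₀ + t • ξ + t ^ 2 • (κ • ν)) (Y σ) <
        c x₀ y₀ - c (x₀ + t • ξ + t ^ 2 • (κ • ν)) y₀ := by
    intro σ h1 h2 h3
    obtain ⟨a1, a2, a3⟩ := curve_derivs (hc y₀ hy) ξ (κ • ν)
    obtain ⟨b1, b2, b3⟩ := curve_derivs (hc _ h2) ξ (κ • ν)
    set f := fun t : ℝ => c (x₀ + t • ξ + t ^ 2 • (κ • ν)) y₀ with hf
    set g := fun t : ℝ => c (x₀ + t • ξ + t ^ 2 • (κ • ν)) (Y σ) with hg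
    have hgr : gradx c x₀ (Y σ) = gradx c x₀ y₀ - σ • ν := by
      have : gradx c x₀ (Y σ) = -(p₀ + σ • ν) := by rw [← h3, neg_neg]
      rw [this, hp₀]; abel
    have hder : deriv (fun t => f t - g t) =ᶠ[𝓝 0] fun t => deriv f t - deriv g t := by
      filter_upwards [a1, b1] with t ha hb
      exact (ha.hasDerivAt.sub hb.hasDerivAt).deriv
    have ht := strict_max_test (f := fun t => f t - g t)
      (by filter_upwards [a1, b1] with t ha hb using ha.sub hb)
      (by
        rw [hder.self_of_nhds]
        change deriv f 0 - deriv g 0 = 0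
        rw [a2, b2, hgr, inner_sub_left, inner_smul_left,
          real_inner_comm ξ ν, horth]; simp)
      (by
        rw [hder.deriv_eq]
        change deriv (deriv f - deriv g) 0 < 0
        rw [(a3.sub b3).deriv, hgr, inner_sub_left, inner_smul_right,
          inner_smul_left, inner_smul_right, real_inner_self_eq_norm_sq]
        have hE0 : E 0 = -Qxx c x₀ ξ y₀ := by simp [E, D, hY0]
        have hEσ : E σ = -Qxx c x₀ ξ (Y σ) + 2 * κ * ‖ν‖ ^ 2 * σ := rfl
        rw [hE0, hEσ] at h1
        simp only [RCLike.conj_to_real]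
        linarith)
    filter_upwards [ht] with t ht'
    have hf0 : f 0 = c x₀ y₀ := by simp [hf]
    have hg0 : g 0 = c x₀ (Y σ) := by simp [hg]
    have h4 : f t - g t < f 0 - g 0 := ht'
    rw [hf0, hg0] at h4
    have h5 : f t = c (x₀ + t • ξ + t ^ 2 • (κ • ν)) y₀ := rfl
    have h6 : g t = c (x₀ + t • ξ + t ^ 2 • (κ • ν)) (Y σ) := rfl
    rw [← h5, ← h6]
    linarith
  have hin : ∀ᶠ t in 𝓝[≠] (0:ℝ), x₀ + t • ξ + t ^ 2 • (κ • ν) ∈ Ω := by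
    apply nhdsWithin_le_nhds
    have hcn : Continuous fun t : ℝ => x₀ + t • ξ + t ^ 2 • (κ • ν) := by fun_prop
    have := hcn.tendsto 0
    simp only [zero_smul, add_zero, ne_eq, OfNat.ofNat_ne_zero, not_false_eq_true, zero_pow] at this
    exact this.eventually (hΩo.mem_nhds hx)
  obtain ⟨t, ⟨ht1, ht2⟩, ht3⟩ := (((key s hs1 hs2 hs3).and (key (-s) hs4 hs5 hs6)).and hin).exists
  refine ⟨_, ht3, Y s, hs2, Y (-s), hs5, ?_, ht1, ht2⟩
  have e1 : gradx c x₀ (Y s) = -(p₀ + s • ν) := by rw [← hs3, neg_neg]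
  have e2 : gradx c x₀ (Y (-s)) = -(p₀ + (-s) • ν) := by rw [← hs6, neg_neg]
  rw [e1, e2, hp₀]
  module

lemma c_near {n : ℕ} {c : Euc n → Euc n → ℝ} {a b : Euc n}
    (h : ContDiffAt ℝ 4 (cU c) (a, b)) {g : ℝ} (hg : 0 < g) :
    ∀ᶠ η in 𝓝[>] (0:ℝ), ∀ x y, dist x a < η → dist y b < η → |c x y - c a b| < g := by
  have h1 := Metric.continuousAt_iff.1 h.continuousAt g hg
  obtain ⟨δ, hδ, h2⟩ := h1
  filter_upwards [Ioo_mem_nhdsGT hδ] with η hη x y hx hy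
  have := h2 (x := (x, y)) (by
    rw [Prod.dist_eq]; exact max_lt (hx.trans hη.2) (hy.trans hη.2))
  rwa [Real.dist_eq] at this

lemma c_near_unif {n : ℕ} {c : Euc n → Euc n → ℝ} {Ω Ω' : Set (Euc n)} (hA0 : CondA0 c Ω Ω')
    (hΩb : IsBounded Ω) {b : Euc n} (hb : b ∈ Ω') {g : ℝ} (hg : 0 < g) :
    ∀ᶠ η in 𝓝[>] (0:ℝ), ∀ x ∈ Ω, ∀ y, dist y b < η → |c x y - c x b| < g := by
  have hK : IsCompact (closure Ω) := hΩb.isCompact_closure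
  have h1 : ∀ᶠ y in 𝓝 b, ∀ x ∈ closure Ω, |c x y - c x b| < g := by
    apply hK.eventually_forall_of_forall_eventually
    intro x hx
    have hc := (cU_contDiffAt hA0 hx (subset_closure hb)).continuousAt
    have e1 : ContinuousAt (fun z : Euc n × Euc n => c z.2 z.1) (b, x) :=
      ContinuousAt.comp (f := fun z : Euc n × Euc n => (z.2, z.1)) (g := cU c) hc
        (by fun_prop)
    have e2 : ContinuousAt (fun z : Euc n × Euc n => c z.2 b) (b, x) :=
      ContinuousAt.comp (f := fun z : Euc n × Euc n => (z.2, b)) (g := cU c) hc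
        (by fun_prop)
    have e3 : ContinuousAt (fun z : Euc n × Euc n => |c z.2 z.1 - c z.2 b|) (b, x) :=
      (e1.sub e2).abs
    exact e3.eventually_lt continuousAt_const (by simpa using hg)
  obtain ⟨δ, hδ, h2⟩ := Metric.eventually_nhds_iff.1 h1
  filter_upwards [Ioo_mem_nhdsGT hδ] with η hη x hx y hy
  exact h2 (hy.trans hη.2) x (subset_closure hx)

lemma c_diff {n : ℕ} {c : Euc n → Euc n → ℝ} {a b : Euc n}
    (h : ContDiffAt ℝ 4 (cU c) (a, b)) {ε : ℝ} (hε : 0 < ε) :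
    ∀ᶠ r in 𝓝[>] (0:ℝ), ∀ x ∈ closedBall a r,
      c x b - c a b - ⟪gradx c a b, x - a⟫ ≤ ε * ‖x - a‖ := by
  have h1 := (hasGradientAt_iff_isLittleO.1 (hasGradientAt_fst h)).def hε
  obtain ⟨δ, hδ, h2⟩ := Metric.eventually_nhds_iff.1 h1
  filter_upwards [Ioo_mem_nhdsGT hδ] with r hr x hx
  have := h2 (y := x) (lt_of_le_of_lt hx hr.2)
  exact (le_abs_self _).trans this

lemma exp_near {n : ℕ} {c : Euc n → Euc n → ℝ} {Ω Ω' : Set (Euc n)} (hA0 : CondA0 c Ω Ω')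
    (hΩ'b : IsBounded Ω') {x₀ y₂ : Euc n} (hx₀ : x₀ ∈ Ω) (hy₂ : y₂ ∈ Ω')
    (hinj : InjOn (fun y => -gradx c x₀ y) (closure Ω')) {η : ℝ} (hη : 0 < η) :
    ∃ ε > 0, ∀ x, dist x x₀ < ε → ∀ y ∈ Ω', ‖gradx c x y - gradx c x₀ y₂‖ < ε → dist y y₂ < η := by
  have hK : IsCompact (closure Ω' ∩ {y | η ≤ dist y y₂}) :=
    hΩ'b.isCompact_closure.inter_right (isClosed_le continuous_const (by fun_prop))
  have h1 : ∀ᶠ q in 𝓝 ((0:ℝ), x₀), ∀ y ∈ closure Ω' ∩ {y | η ≤ dist y y₂},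
      q.1 < ‖gradx c q.2 y - gradx c x₀ y₂‖ := by
    apply hK.eventually_forall_of_forall_eventually
    intro y hy
    have hc := (gradx_contDiffAt (cU_contDiffAt hA0 (subset_closure hx₀) hy.1)).continuousAt
    have e1 : ContinuousAt (fun z : (ℝ × Euc n) × Euc n => gradx c z.1.2 z.2) ((0, x₀), y) :=
      ContinuousAt.comp (f := fun z : (ℝ × Euc n) × Euc n => (z.1.2, z.2))
        (g := fun p : Euc n × Euc n => gradx c p.1 p.2) hc (by fun_prop)
    have e2 : ContinuousAt (fun z : (ℝ × Euc n) × Euc n => ‖gradx c z.1.2 z.2 - gradx c x₀ y₂‖)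
        ((0, x₀), y) := (e1.sub continuousAt_const).norm
    have e3 : ContinuousAt (fun z : (ℝ × Euc n) × Euc n => z.1.1) ((0, x₀), y) := by fun_prop
    refine e3.eventually_lt e2 ?_
    refine norm_pos_iff.2 fun h0 => ?_
    have : y = y₂ := hinj hy.1 (subset_closure hy₂) (by
      simp only [neg_inj]; exact sub_eq_zero.1 h0)
    have h3 : η ≤ dist y y₂ := hy.2
    rw [this, dist_self] at h3
    linarith
  obtain ⟨δ, hδ, h2⟩ := Metric.eventually_nhds_iff.1 h1
  refine ⟨δ / 2, by positivity, fun x hx y hy hg => ?_⟩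
  by_contra hcon
  have := h2 (y := (δ / 2, x)) (by
    rw [Prod.dist_eq]
    refine max_lt ?_ (hx.trans (by linarith))
    rw [Real.dist_eq, sub_zero, abs_of_pos (by positivity)]; linarith) y
    ⟨subset_closure hy, not_lt.1 hcon⟩
  exact absurd this (not_lt.2 hg.le)

lemma c_bdd {n : ℕ} {c : Euc n → Euc n → ℝ} {Ω Ω' : Set (Euc n)} (hA0 : CondA0 c Ω Ω')
    (hΩb : IsBounded Ω) (hΩ'b : IsBounded Ω') :
    ∃ M, ∀ x ∈ Ω, ∀ y ∈ Ω', |c x y| ≤ M := by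
  have hK : IsCompact (closure Ω ×ˢ closure Ω') :=
    hΩb.isCompact_closure.prod hΩ'b.isCompact_closure
  have hcont : ContinuousOn (cU c) (closure Ω ×ˢ closure Ω') := fun p hp =>
    (cU_contDiffAt hA0 hp.1 hp.2).continuousAt.continuousWithinAt
  obtain ⟨M, hM⟩ := hK.exists_bound_of_continuousOn hcont
  exact ⟨M, fun x hx y hy => hM (x, y) ⟨subset_closure hx, subset_closure hy⟩⟩

lemma support_ineq {n : ℕ} {c : Euc n → Euc n → ℝ} {Ω Ω' : Set (Euc n)} (hA0 : CondA0 c Ω Ω')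
    (hΩb : IsBounded Ω) (hΩ'b : IsBounded Ω') {φ : Euc n → ℝ} (hφ : CConvexOn c Ω Ω' φ)
    {x y : Euc n} (hy : y ∈ contactSet c Ω Ω' φ x) :
    ∀ z ∈ Ω, φ x + c x y - c z y ≤ φ z := by
  obtain ⟨M, hM⟩ := c_bdd hA0 hΩb hΩ'b
  obtain ⟨ψ, -, hψ⟩ := hφ
  obtain ⟨hyΩ, hyc⟩ := hy
  have hlow : ∀ z ∈ Ω, min (-M - ψ y) 0 ≤ φ z := by
    intro z hz
    rw [hψ z hz, cstarTransform]
    by_cases hb : BddAbove ((fun y => -c z y - ψ y) '' Ω')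
    · refine (min_le_left _ _).trans (le_trans ?_ (le_csSup hb ⟨y, hyΩ, rfl⟩))
      have := (abs_le.1 (hM z hz y hyΩ)).2
      simp only; linarith
    · rw [Real.sSup_of_not_bddAbove hb]
      exact min_le_right _ _
  have hbdd : BddAbove ((fun x => -c x y - φ x) '' Ω) := by
    refine ⟨M - min (-M - ψ y) 0, ?_⟩
    rintro _ ⟨z, hz, rfl⟩
    have := (abs_le.1 (hM z hz y hyΩ)).1
    have := hlow z hz
    simp only; linarith
  intro z hz
  have h1 : -c z y - φ z ≤ ctransform c Ω φ y := le_csSup hbdd ⟨z, hz, rfl⟩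
  linarith

lemma grad_eq_of_support {n : ℕ} {c : Euc n → Euc n → ℝ} {Ω : Set (Euc n)} (hΩo : IsOpen Ω)
    {φ : Euc n → ℝ} (hd : DifferentiableOn ℝ φ Ω)
    {x y : Euc n} (hx : x ∈ Ω) (hc : ContDiffAt ℝ 4 (cU c) (x, y))
    (hs : ∀ z ∈ Ω, φ x + c x y - c z y ≤ φ z) : gradient φ x = -gradx c x y := by
  have h1 := (hd.differentiableAt (hΩo.mem_nhds hx)).hasGradientAt.hasFDerivAt
  have h2 := (hasGradientAt_fst hc).hasFDerivAt
  have hmin : IsLocalMin (fun z => φ z + c z y) x := by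
    filter_upwards [hΩo.mem_nhds hx] with z hz
    have := hs z hz
    linarith
  have h3 := hmin.hasFDerivAt_eq_zero (h1.add h2)
  rw [← map_add, map_eq_zero_iff _ (InnerProductSpace.toDual ℝ (Euc n)).injective] at h3
  exact eq_neg_of_add_eq_zero_left h3

/-- Interior minimum argument: a C¹ function lying above a kink has an intermediate gradient. -/
lemma exists_grad_near {n : ℕ} {Ω : Set (Euc n)} (hΩo : IsOpen Ω) {φ : Euc n → ℝ}
    (hφ : ContDiffOn ℝ 1 φ Ω) {x₀ z₀ p : Euc n} {r ε : ℝ} (hr : 0 < r) (hε : 0 < ε)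
    (hball : closedBall x₀ r ⊆ Ω) (hz₀ : z₀ ∈ closedBall x₀ r)
    (hsph : ∀ x ∈ sphere x₀ r, φ z₀ - ⟪p, z₀ - x₀⟫ + ε / (4 * r) * ‖z₀ - x₀‖ ^ 2 <
      φ x - ⟪p, x - x₀⟫ + ε * r / 4) :
    ∃ x ∈ ball x₀ r, ‖gradient φ x - p‖ < ε := by
  set k := ε / (4 * r) with hk
  have hkpos : 0 < k := by positivity
  let h : Euc n → ℝ := fun x => φ x - ⟪p, x - x₀⟫ + k * ‖x - x₀‖ ^ 2
  have hcont : ContinuousOn h (closedBall x₀ r) := by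
    refine ((hφ.continuousOn.mono hball).sub ?_).add ?_
    · exact Continuous.continuousOn (by fun_prop)
    · exact Continuous.continuousOn (by fun_prop)
  obtain ⟨x, hx, hmin⟩ := (isCompact_closedBall x₀ r).exists_isMinOn ⟨z₀, hz₀⟩ hcont
  have hxb : x ∈ ball x₀ r := by
    by_contra hcon
    have hxs : dist x x₀ = r := le_antisymm hx (not_lt.1 hcon)
    have h1 := hsph x hxs
    have h2 : h x ≤ h z₀ := hmin hz₀
    have h3 : h x = φ x - ⟪p, x - x₀⟫ + k * r ^ 2 := by
      simp only [h]; rw [← dist_eq_norm, hxs]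
    have h4 : k * r ^ 2 = ε * r / 4 := by rw [hk]; field_simp
    rw [h3, h4] at h2
    simp only [h] at h2
    linarith
  refine ⟨x, hxb, ?_⟩
  have hloc : IsLocalMin h x := by
    filter_upwards [isOpen_ball.mem_nhds hxb] with z hz
    exact hmin (ball_subset_closedBall hz)
  have hd := (hφ.differentiableOn (by norm_num)).differentiableAt (hΩo.mem_nhds (hball hx))
  have e1 := hd.hasGradientAt.hasFDerivAt
  have e0 : HasFDerivAt (fun x : Euc n => x - x₀) (ContinuousLinearMap.id ℝ (Euc n)) x :=
    (hasFDerivAt_id x).sub_const x₀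
  have e2 : HasFDerivAt (fun x : Euc n => ⟪p, x - x₀⟫) (InnerProductSpace.toDual ℝ (Euc n) p) x :=
    HasFDerivAt.comp x (InnerProductSpace.toDual ℝ (Euc n) p).hasFDerivAt e0
  have e3 : HasFDerivAt (fun x : Euc n => k * ‖x - x₀‖ ^ 2) _ x := (e0.norm_sq).const_mul k
  have hz := hloc.hasFDerivAt_eq_zero ((e1.sub e2).add e3)
  have hzero : gradient φ x - p + (2 * k) • (x - x₀) = 0 := by
    refine ext_inner_right ℝ fun v => ?_
    have := DFunLike.congr_fun hz v
    simp at this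
    rw [inner_add_left, inner_sub_left, inner_smul_left, inner_zero_left]
    simp only [RCLike.conj_to_real]
    simp only [inner_sub_left] at this ⊢
    have hgv : ⟪gradient φ x, v⟫ = fderiv ℝ φ x v := by
      rw [gradient, InnerProductSpace.toDual_symm_apply]
    rw [hgv]
    linarith
  have heq : gradient φ x - p = -((2 * k) • (x - x₀)) := eq_neg_of_add_eq_zero_left hzero
  rw [heq, norm_neg, norm_smul, Real.norm_of_nonneg (by positivity)]
  have h5 : ‖x - x₀‖ < r := by rw [← dist_eq_norm]; exact hxb
  calc 2 * k * ‖x - x₀‖ ≤ 2 * k * r := by gcongr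
    _ = ε / 2 := by rw [hk]; field_simp; norm_num
    _ < ε := by linarith

lemma partI {n : ℕ} {c : Euc n → Euc n → ℝ} {Ω Ω' : Set (Euc n)}
    (hΩo : IsOpen Ω) (hΩb : IsBounded Ω) (hΩ'o : IsOpen Ω') (hΩ'b : IsBounded Ω')
    (hA0 : CondA0 c Ω Ω') {x₀ x₁ ya yb y₂ : Euc n}
    (hx₀ : x₀ ∈ Ω) (hx₁ : x₁ ∈ Ω) (hya : ya ∈ Ω') (hyb : yb ∈ Ω') (hy₂ : y₂ ∈ Ω')
    (hinj : InjOn (fun y => -gradx c x₀ y) (closure Ω'))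
    (hmid : gradx c x₀ ya + gradx c x₀ yb = (2:ℝ) • gradx c x₀ y₂)
    (hga : c x₀ ya - c x₁ ya < c x₀ y₂ - c x₁ y₂)
    (hgb : c x₀ yb - c x₁ yb < c x₀ y₂ - c x₁ y₂) :
    ∃ (μ₀ μ₁ : Measure (Euc n)) (ρ₀ ρ₁ : Euc n → ℝ),
      IsProbabilityMeasure μ₀ ∧ IsProbabilityMeasure μ₁ ∧
      ContDiff ℝ (⊤ : ℕ∞) ρ₀ ∧ ContDiff ℝ (⊤ : ℕ∞) ρ₁ ∧
      (∀ x ∈ closure Ω, 0 < ρ₀ x) ∧ (∀ y ∈ closure Ω', 0 < ρ₁ y) ∧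
      μ₀ = (volume.restrict (closure Ω)).withDensity (fun x => ENNReal.ofReal (ρ₀ x)) ∧
      μ₁ = (volume.restrict (closure Ω')).withDensity (fun y => ENNReal.ofReal (ρ₁ y)) ∧
      ¬ ∃ φ : Euc n → ℝ, CConvexOn c Ω Ω' φ ∧ ContDiffOn ℝ 1 φ Ω ∧
          GradPush c Ω Ω' φ μ₀ μ₁ := by
  have hc : ∀ x ∈ Ω, ∀ y ∈ Ω', ContDiffAt ℝ 4 (cU c) (x, y) := fun x hx y hy =>
    cU_contDiffAt hA0 (subset_closure hx) (subset_closure hy)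
  -- step 1
  obtain ⟨g, hg, hga', hgb'⟩ : ∃ g > 0, c x₀ ya - c x₁ ya + 4 * g ≤ c x₀ y₂ - c x₁ y₂ ∧
      c x₀ yb - c x₁ yb + 4 * g ≤ c x₀ y₂ - c x₁ y₂ := by
    refine ⟨min ((c x₀ y₂ - c x₁ y₂) - (c x₀ ya - c x₁ ya))
      ((c x₀ y₂ - c x₁ y₂) - (c x₀ yb - c x₁ yb)) / 4, ?_, ?_, ?_⟩
    · have := lt_min (sub_pos.2 hga) (sub_pos.2 hgb)
      positivity
    · have := min_le_left ((c x₀ y₂ - c x₁ y₂) - (c x₀ ya - c x₁ ya))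
        ((c x₀ y₂ - c x₁ y₂) - (c x₀ yb - c x₁ yb))
      linarith
    · have := min_le_right ((c x₀ y₂ - c x₁ y₂) - (c x₀ ya - c x₁ ya))
        ((c x₀ y₂ - c x₁ y₂) - (c x₀ yb - c x₁ yb))
      linarith
  have hpos : ∀ᶠ η in 𝓝[>] (0:ℝ), 0 < η := self_mem_nhdsWithin
  obtain ⟨η, hη, k1, k2, k3, k4, k5, k6⟩ := (hpos.and <|
    (c_near (hc x₀ hx₀ y₂ hy₂) hg).and <| (c_near (hc x₁ hx₁ y₂ hy₂) hg).and <|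
    (c_near (hc x₀ hx₀ ya hya) hg).and <| (c_near (hc x₁ hx₁ ya hya) hg).and <|
    (c_near (hc x₀ hx₀ yb hyb) hg).and (c_near (hc x₁ hx₁ yb hyb) hg)).exists
  -- step 2
  obtain ⟨ε, hε, hexp⟩ := exp_near hA0 hΩ'b hx₀ hy₂ hinj hη
  -- step 3
  have hsmall : ∀ a : ℝ, 0 < a → ∀ᶠ r in 𝓝[>] (0:ℝ), r < a := fun a ha =>
    (Ioo_mem_nhdsGT ha : Ioo 0 a ∈ _) |> fun h => Filter.mem_of_superset h fun _ h => h.2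
  obtain ⟨R, hR, hRΩ⟩ := Metric.isOpen_iff.1 hΩo x₀ hx₀
  obtain ⟨r, hr, hrε, hrη, hrR, hda, hdb⟩ := (hpos.and <| (hsmall ε hε).and <|
    (hsmall η hη).and <| (hsmall R hR).and <|
    (c_diff (hc x₀ hx₀ ya hya) (show 0 < ε / 8 by positivity)).and
    (c_diff (hc x₀ hx₀ yb hyb) (show 0 < ε / 8 by positivity))).exists
  have hrΩ : closedBall x₀ r ⊆ Ω := (closedBall_subset_ball hrR).trans hRΩ
  -- step 4
  obtain ⟨e, he, hedef⟩ : ∃ e > 0, e = ε * r / 100 := ⟨_, by positivity, rfl⟩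
  obtain ⟨Ra, hRa, hRaΩ⟩ := Metric.isOpen_iff.1 hΩ'o ya hya
  obtain ⟨Rb, hRb, hRbΩ⟩ := Metric.isOpen_iff.1 hΩ'o yb hyb
  obtain ⟨R1, hR1, hR1Ω⟩ := Metric.isOpen_iff.1 hΩo x₁ hx₁
  set p : Euc n := -gradx c x₀ y₂ with hp
  have hrest : ∀ᶠ δ in 𝓝[>] (0:ℝ), ∀ z, dist z x₀ < δ →
      -⟪p, z - x₀⟫ + ε / (4 * r) * ‖z - x₀‖ ^ 2 < e := by
    have hcn : Continuous fun z : Euc n => -⟪p, z - x₀⟫ + ε / (4 * r) * ‖z - x₀‖ ^ 2 := by fun_prop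
    have h1 : ∀ᶠ z in 𝓝 x₀, -⟪p, z - x₀⟫ + ε / (4 * r) * ‖z - x₀‖ ^ 2 < e :=
      hcn.continuousAt.eventually_lt continuousAt_const (by simpa using he)
    obtain ⟨δ, hδ, h2⟩ := Metric.eventually_nhds_iff.1 h1
    filter_upwards [hsmall δ hδ] with δ' hδ' z hz
    exact h2 (hz.trans hδ')
  obtain ⟨δ, hδ, hδr, hδη, hδa, hδb, hδ1, ma, mb, ua, ub, hpen⟩ := (hpos.and <|
    (hsmall r hr).and <| (hsmall η hη).and <| (hsmall Ra hRa).and <| (hsmall Rb hRb).and <|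
    (hsmall R1 hR1).and <| (c_near (hc x₀ hx₀ ya hya) he).and <|
    (c_near (hc x₀ hx₀ yb hyb) he).and <| (c_near_unif hA0 hΩb hya he).and <|
    (c_near_unif hA0 hΩb hyb he).and hrest).exists
  have hB0 : ball x₀ δ ⊆ Ω := (ball_subset_ball hδr.le).trans (ball_subset_closedBall.trans hrΩ)
  have hB1 : ball x₁ δ ⊆ Ω := (ball_subset_ball hδ1.le).trans hR1Ω
  have hBa : ball ya δ ⊆ Ω' := (ball_subset_ball hδa.le).trans hRaΩ
  have hBb : ball yb δ ⊆ Ω' := (ball_subset_ball hδb.le).trans hRbΩ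
  -- step 5
  obtain ⟨μ₀, ρ₀, hμ₀, hρ₀s, hρ₀, hμ₀e, hm0, hm1, -⟩ := exists_conc Ω hΩb x₀ x₁ δ hδ hB0 hB1
    (3/4) (1/5) (1/20) (by norm_num) (by norm_num) (by norm_num) (by norm_num)
  obtain ⟨μ₁, ρ₁, hμ₁, hρ₁s, hρ₁, hμ₁e, hma, hmb, hmab⟩ := exists_conc Ω' hΩ'b ya yb δ hδ hBa hBb
    (9/20) (9/20) (1/10) (by norm_num) (by norm_num) (by norm_num) (by norm_num)
  refine ⟨μ₀, μ₁, ρ₀, ρ₁, hμ₀, hμ₁, hρ₀s, hρ₁s, fun x _ => hρ₀ x, fun y _ => hρ₁ y, hμ₀e, hμ₁e, ?_⟩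
  -- step 6
  rintro ⟨φ, hφc, hφ1, Tm, hTm, hTmc, hmap⟩
  have hgood := exists_good μ₀ μ₁ Tm hTm hmap _ hTmc
  obtain ⟨za, hza, hwa, hca⟩ := hgood (ball x₀ δ) (ball ya δ) measurableSet_ball
    (3/4) (9/20) (by norm_num) (by norm_num) (by norm_num) hm0 hma
  obtain ⟨zb, hzb, hwb, hcb⟩ := hgood (ball x₀ δ) (ball yb δ) measurableSet_ball
    (3/4) (9/20) (by norm_num) (by norm_num) (by norm_num) hm0 hmb
  obtain ⟨x', hx', hw', hc'⟩ := hgood (ball x₁ δ) (ball ya δ ∪ ball yb δ)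
    (measurableSet_ball.union measurableSet_ball)
    (1/5) (9/20 + 9/20) (by norm_num) (by norm_num) (by norm_num) hm1 hmab
  have sa := support_ineq hA0 hΩb hΩ'b hφc hca
  have sb := support_ineq hA0 hΩb hΩ'b hφc hcb
  have s' := support_ineq hA0 hΩb hΩ'b hφc hc'
  have hsph : ∀ x ∈ sphere x₀ r, φ za - ⟪p, za - x₀⟫ + ε / (4 * r) * ‖za - x₀‖ ^ 2 <
      φ x - ⟪p, x - x₀⟫ + ε * r / 4 := by
    intro x hx
    have hxc : x ∈ closedBall x₀ r := sphere_subset_closedBall hx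
    have hxn : ‖x - x₀‖ = r := by rw [← dist_eq_norm]; exact hx
    have t1 := sa x (hrΩ hxc)
    have t2 := sb x (hrΩ hxc)
    have t3 := sa zb (hB0 hzb)
    have t4 := abs_lt.1 (ma za (Tm za) hza hwa)
    have t5 := abs_lt.1 (ma zb (Tm za) hzb hwa)
    have t6 := abs_lt.1 (mb zb (Tm zb) hzb hwb)
    have t7 := abs_lt.1 (ua x (hrΩ hxc) (Tm za) hwa)
    have t8 := abs_lt.1 (ub x (hrΩ hxc) (Tm zb) hwb)
    have t9 := hda x hxc
    have t10 := hdb x hxc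
    rw [hxn] at t9 t10
    have t11 : ⟪gradx c x₀ ya, x - x₀⟫ + ⟪gradx c x₀ yb, x - x₀⟫ = -2 * ⟪p, x - x₀⟫ := by
      rw [← inner_add_left, hmid, hp, inner_smul_left, inner_neg_left]; simp
    have t12 := hpen za hza
    nlinarith [mul_pos hε hr]
  obtain ⟨xs, hxs, hgrad⟩ := exists_grad_near hΩo hφ1 hr hε hrΩ
    (ball_subset_closedBall (ball_subset_ball hδr.le hza)) hsph
  have hxsΩ : xs ∈ Ω := hrΩ (ball_subset_closedBall hxs)
  have hgc : ContinuousAt (fun x => gradient φ x) xs := by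
    have h1 := (hφ1.continuousOn_fderiv_of_isOpen hΩo (by norm_num)).continuousAt
      (hΩo.mem_nhds hxsΩ)
    exact (InnerProductSpace.toDual ℝ (Euc n)).symm.continuous.continuousAt.comp h1
  have hev : ∀ᶠ x in 𝓝 xs, x ∈ ball x₀ r ∧ ‖gradient φ x - p‖ < ε :=
    Filter.Eventually.and (isOpen_ball.mem_nhds hxs)
      ((hgc.sub continuousAt_const).norm.eventually_lt continuousAt_const hgrad)
  obtain ⟨U, hU, hUo, hUxs⟩ := _root_.eventually_nhds_iff.1 hev
  have hUpos : μ₀ U ≠ 0 := by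
    intro h0
    have hUU : U ∩ Ω ⊆ U := inter_subset_left
    have h1 : μ₀ (U ∩ Ω) = 0 := measure_mono_null hUU h0
    have hmeas : MeasurableSet (U ∩ Ω) := (hUo.inter hΩo).measurableSet
    rw [hμ₀e, withDensity_apply _ hmeas, Measure.restrict_restrict hmeas,
      inter_eq_left.2 (inter_subset_right.trans subset_closure)] at h1
    have h2 := (lintegral_eq_zero_iff (by
      exact (hρ₀s.continuous.measurable).ennreal_ofReal)).1 h1
    have h3 : ∀ᵐ x ∂(volume.restrict (U ∩ Ω)), False := by
      filter_upwards [h2] with x hx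
      have : ENNReal.ofReal (ρ₀ x) = 0 := hx
      rw [ENNReal.ofReal_eq_zero] at this
      exact absurd (hρ₀ x) (not_lt.2 this)
    rw [eventually_false_iff_eq_bot, ae_eq_bot, Measure.restrict_eq_zero] at h3
    exact (hUo.inter hΩo).measure_ne_zero volume ⟨xs, hUxs, hxsΩ⟩ h3
  obtain ⟨x, hxU, hcx⟩ : ∃ x ∈ U, Tm x ∈ contactSet c Ω Ω' φ x := by
    by_contra hcon
    push Not at hcon
    exact hUpos (measure_mono_null (fun x hx => hcon x hx) (ae_iff.1 hTmc))
  obtain ⟨hxr, hxg⟩ := hU x hxU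
  have hxΩ : x ∈ Ω := hrΩ (ball_subset_closedBall hxr)
  have sx := support_ineq hA0 hΩb hΩ'b hφc hcx
  have hgx := grad_eq_of_support hΩo (hφ1.differentiableOn (by norm_num)) hxΩ
    (hc x hxΩ _ hcx.1) sx
  have hyn : dist (Tm x) y₂ < η := by
    refine hexp x (lt_trans hxr hrε) _ hcx.1 ?_
    rw [hgx, hp, ← neg_sub', norm_neg] at hxg
    exact hxg
  have hxη : dist x x₀ < η := lt_trans hxr hrη
  have hx'η : dist x' x₁ < η := lt_trans hx' hδη
  have q1 := abs_lt.1 (k1 x (Tm x) hxη hyn)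
  have q2 := abs_lt.1 (k2 x' (Tm x) hx'η hyn)
  have q3 := sx x' (hB1 hx')
  have q4 := s' x hxΩ
  rcases hw' with hw | hw
  · have q5 := abs_lt.1 (k3 x (Tm x') hxη (lt_trans hw hδη))
    have q6 := abs_lt.1 (k4 x' (Tm x') hx'η (lt_trans hw hδη))
    linarith
  · have q5 := abs_lt.1 (k5 x (Tm x') hxη (lt_trans hw hδη))
    have q6 := abs_lt.1 (k6 x' (Tm x') hx'η (lt_trans hw hδη))
    linarith

/-- if condition Aw is violated at some (x₀,y₀) ∈ Ω×Ω' (i.e. some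
cost-sectional curvature is negative), then there exist probability measures with smooth
strictly positive densities on cl(Ω), cl(Ω') for which no C¹ c-convex potential solves the
optimal transportation problem. -/
theorem stmt_3 {n : ℕ} (Ω Ω' : Set (Euc n))
    (hΩo : IsOpen Ω) (hΩb : IsBounded Ω) (hΩ'o : IsOpen Ω') (hΩ'b : IsBounded Ω')
    (hΩsb : SmoothBoundary Ω) (hΩ'sb : SmoothBoundary Ω')
    (c : Euc n → Euc n → ℝ) (T : Euc n → Euc n → Euc n)
    (hA0 : CondA0 c Ω Ω') (hA1 : CondA1 c Ω Ω') (hA2 : CondA2 c Ω Ω')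
    (hT : IsCExp c Ω Ω' T)
    (hucc : UnifStrictCConvex c Ω Ω') (hucc' : UnifStrictCstarConvex c Ω Ω')
    (hviol : ∃ x₀ ∈ Ω, ∃ y₀ ∈ Ω', ∃ ξ ν : Euc n,
      ⟪ξ, ν⟫ = 0 ∧ costSecCurv c T x₀ y₀ ξ ν < 0) :
    ∃ (μ₀ μ₁ : Measure (Euc n)) (ρ₀ ρ₁ : Euc n → ℝ),
      IsProbabilityMeasure μ₀ ∧ IsProbabilityMeasure μ₁ ∧
      ContDiff ℝ (⊤ : ℕ∞) ρ₀ ∧ ContDiff ℝ (⊤ : ℕ∞) ρ₁ ∧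
      (∀ x ∈ closure Ω, 0 < ρ₀ x) ∧ (∀ y ∈ closure Ω', 0 < ρ₁ y) ∧
      μ₀ = (volume.restrict (closure Ω)).withDensity (fun x => ENNReal.ofReal (ρ₀ x)) ∧
      μ₁ = (volume.restrict (closure Ω')).withDensity (fun y => ENNReal.ofReal (ρ₁ y)) ∧
      ¬ ∃ φ : Euc n → ℝ, CConvexOn c Ω Ω' φ ∧ ContDiffOn ℝ 1 φ Ω ∧
          GradPush c Ω Ω' φ μ₀ μ₁ := by
  obtain ⟨x₀, hx₀, y₀, hy₀, ξ, ν, horth, hneg⟩ := hviol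
  obtain ⟨x₁, hx₁, ya, hya, yb, hyb, hmid, ha, hb⟩ :=
    partII hΩo hΩ'o hA0 hA2 hT hx₀ hy₀ horth hneg
  exact partI hΩo hΩb hΩ'o hΩ'b hA0 hx₀ hx₁ hya hyb hy₀ (hA1 x₀ (subset_closure hx₀)).1
    hmid ha hb
end

section
/- Let Ω, Ω' be connected bounded open subsets of ℝⁿ and let c satisfy condition A0. Let μ, ν be probability measures on Ω and Ω', and assume μ is absolutely continuous with respect to Lebesgue measure with density strictly positive Lebesgue-almost everywhere on Ω. Suppose π is a coupling of (μ,ν) (a probability measure on ℝⁿ×ℝⁿ with marginals μ and ν), φ̄ is c-convex on Ω, and π is concentrated on the contact graph {(x,y) ∈ Ω×Ω' : φ̄(x) + φ̄ᶜ(y) = −c(x,y)}. If φ is c-convex on Ω and ∫ (φ(x) + φᶜ(y) + c(x,y)) dπ(x,y) = 0, then φ − φ̄ is constant on Ω. Consequently, up to an additive constant, there is at most one c-convex maximizer φ (with ψ = φᶜ) of the dual Monge–Kantorovich problem sup{ −∫φ dμ − ∫ψ dν : φ(x)+ψ(y) ≥ −c(x,y) }. -/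
open Set Filter Topology MeasureTheory Metric Bornology
open scoped RealInnerProductSpace ENNReal NNReal Topology

lemma aux_const_ball {n : ℕ} {h : Euc n → ℝ} {x₀ : Euc n} {r : ℝ} {K : ℝ≥0} (hr : 0 < r)
    (hL : LipschitzOnWith K h (ball x₀ r))
    (hae : ∀ᵐ x ∂(volume : Measure (Euc n)), x ∈ ball x₀ r →
      DifferentiableAt ℝ h x ∧ fderiv ℝ h x = 0) :
    ∀ x ∈ ball x₀ r, h x = h x₀ := by
  intro x₁ hx₁
  set v := x₁ - x₀ with hv
  let s : Set (Euc n) := {y | y ∈ ball x₀ r → DifferentiableAt ℝ h y ∧ fderiv ℝ h y = 0}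
  have hs : MeasurableSet s := by
    have h1 : MeasurableSet {y : Euc n | DifferentiableAt ℝ h y ∧ fderiv ℝ h y = 0} :=
      (measurableSet_of_differentiableAt ℝ h).inter
        (measurable_fderiv ℝ h (measurableSet_singleton 0))
    have h2 : s = (ball x₀ r)ᶜ ∪ {y : Euc n | DifferentiableAt ℝ h y ∧ fderiv ℝ h y = 0} := by
      ext y; simp only [s, mem_ofPred_eq, mem_union, mem_compl_iff]; tauto
    rw [h2]
    exact measurableSet_ball.compl.union h1
  let L : ℝ →L[ℝ] Euc n := ContinuousLinearMap.smulRight (1 : ℝ →L[ℝ] ℝ) v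
  have h1 : ∀ᵐ y ∂(volume : Measure (Euc n)), ∀ᵐ t ∂(volume : Measure ℝ),
      y + L.toLinearMap t ∈ s :=
    (ae_ae_add_linearMap_mem_iff L.toLinearMap volume volume hs).2 hae
  let W : Set (Euc n) := ball x₀ r ∩ (fun y => y + v) ⁻¹' ball x₀ r
  have hWo : IsOpen W := isOpen_ball.inter (isOpen_ball.preimage (by fun_prop))
  have hae2 : (fun y => h (y + v)) =ᵐ[volume.restrict W] h := by
    rw [Filter.EventuallyEq, ae_restrict_iff' hWo.measurableSet]
    filter_upwards [h1] with y hy hyW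
    have hseg : ∀ t ∈ uIcc (0:ℝ) 1, y + t • v ∈ ball x₀ r := by
      intro t ht
      rw [uIcc_of_le zero_le_one] at ht
      exact (convex_ball x₀ r).add_smul_mem hyW.1 hyW.2 ht
    have hlip : LipschitzOnWith (K * ‖v‖₊) (fun t : ℝ => h (y + t • v)) (uIcc 0 1) := by
      refine hL.comp (LipschitzWith.lipschitzOnWith ?_) hseg
      refine LipschitzWith.of_dist_le_mul fun a b => ?_
      rw [dist_add_left, dist_eq_norm, ← sub_smul, norm_smul, mul_comm]
      simp [dist_eq_norm]
    obtain ⟨C, hC⟩ := hlip.absolutelyContinuousOnInterval.const_of_ae_hasDerivAt_zero (by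
      filter_upwards [hy] with t ht htI
      have := ht (by simpa [L] using hseg t htI)
      have hd : HasFDerivAt h (0 : Euc n →L[ℝ] ℝ) (y + t • v) := by
        have h3 := this.1.hasFDerivAt
        rw [this.2] at h3
        simpa [L] using h3
      have hg : HasDerivAt (fun t : ℝ => y + t • v) v t := by
        simpa using ((hasDerivAt_id t).smul_const v).const_add y
      have h5 := hd.comp_hasDerivAt t hg
      rw [ContinuousLinearMap.zero_apply] at h5
      exact h5)
    have a0 := hC 0 (by simp)
    have a1 := hC 1 (by simp)
    simp only [zero_smul, add_zero, one_smul] at a0 a1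
    rw [a0, a1]
  have hc := hL.continuousOn
  have := Measure.eqOn_open_of_ae_eq hae2 hWo
    (hc.comp (by fun_prop) (fun y hy => hy.2)) (hc.mono inter_subset_left)
  have h4 := this (show x₀ ∈ W from ⟨mem_ball_self hr, by
    have : x₀ + v = x₁ := by simp [v]
    simpa only [mem_preimage, this] using hx₁⟩)
  simpa [v] using h4

lemma aux_sup {n : ℕ} {A B : Set (Euc n)} (hB : B.Nonempty) (k : Euc n → Euc n → ℝ)
    {M : ℝ} (hM : ∀ x ∈ A, ∀ y ∈ B, |k x y| ≤ M) (ψ F : Euc n → ℝ)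
    (hF : ∀ x ∈ A, F x = sSup ((fun y => -k x y - ψ y) '' B)) :
    (∃ R, ∀ x ∈ A, |F x| ≤ R) ∧
    ∀ (C : ℝ≥0) (S : Set (Euc n)), S ⊆ A → (∀ y ∈ B, LipschitzOnWith C (fun x => k x y) S) →
      LipschitzOnWith C F S := by
  by_cases hb : BddBelow (ψ '' B)
  · obtain ⟨m, hm⟩ := hb
    obtain ⟨y₀, hy₀⟩ := hB
    have hm' : ∀ y ∈ B, m ≤ ψ y := fun y hy => hm (mem_image_of_mem _ hy)
    have hbd : ∀ x ∈ A, BddAbove ((fun y => -k x y - ψ y) '' B) := by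
      rintro x hx
      refine ⟨M - m, ?_⟩
      rintro _ ⟨y, hy, rfl⟩
      have := abs_le.1 (hM x hx y hy)
      have := hm' y hy
      simp only; linarith
    have hle : ∀ x ∈ A, ∀ y ∈ B, -k x y - ψ y ≤ F x := fun x hx y hy => by
      rw [hF x hx]; exact le_csSup (hbd x hx) (mem_image_of_mem _ hy)
    have hge : ∀ x ∈ A, ∀ a, (∀ y ∈ B, -k x y - ψ y ≤ a) → F x ≤ a := fun x hx a ha => by
      rw [hF x hx]; exact csSup_le (⟨y₀, hy₀⟩ |> Set.Nonempty.image _) (by rintro _ ⟨y, hy, rfl⟩; exact ha y hy)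
    constructor
    · refine ⟨max (M - m) (M + ψ y₀), fun x hx => abs_le.2 ⟨?_, ?_⟩⟩
      · have := abs_le.1 (hM x hx y₀ hy₀)
        have := hle x hx y₀ hy₀
        have := le_max_right (M - m) (M + ψ y₀)
        linarith
      · refine hge x hx _ fun y hy => ?_
        have := abs_le.1 (hM x hx y hy)
        have := hm' y hy
        have := le_max_left (M - m) (M + ψ y₀)
        linarith
    · intro C S hS hL
      refine LipschitzOnWith.of_le_add_mul _ fun x hx x' hx' => ?_
      refine hge x (hS hx) _ fun y hy => ?_
      have h1 := hle x' (hS hx') y hy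
      have h2 := (hL y hy).dist_le_mul x hx x' hx'
      rw [Real.dist_eq] at h2
      have := abs_le.1 h2
      linarith
  · have h0 : ∀ x ∈ A, F x = 0 := by
      intro x hx
      rw [hF x hx]
      refine Real.sSup_of_not_bddAbove fun ⟨a, ha⟩ => hb ⟨-M - a, ?_⟩
      rintro _ ⟨y, hy, rfl⟩
      have h1 := ha (mem_image_of_mem _ hy)
      have := abs_le.1 (hM x hx y hy)
      linarith
    refine ⟨⟨0, fun x hx => by simp [h0 x hx]⟩, fun C S hS _ => ?_⟩
    refine LipschitzOnWith.of_le_add_mul _ fun x hx x' hx' => ?_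
    rw [h0 x (hS hx), h0 x' (hS hx'), zero_add]
    positivity

lemma aux_cost {n : ℕ} {Ω Ω' : Set (Euc n)} (hb : IsBounded Ω) (hb' : IsBounded Ω')
    {c : Euc n → Euc n → ℝ} (hA0 : CondA0 c Ω Ω') :
    ∃ (M : ℝ) (C : ℝ≥0), (∀ x ∈ Ω, ∀ y ∈ Ω', |c x y| ≤ M) ∧
      ContinuousOn (fun p : Euc n × Euc n => c p.1 p.2) (Ω ×ˢ Ω') ∧
      (∀ x ∈ Ω, ∀ y ∈ Ω', DifferentiableAt ℝ (fun x' => c x' y) x ∧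
        ‖fderiv ℝ (fun x' => c x' y) x‖₊ ≤ C) ∧
      (∀ x ∈ Ω, ∀ y ∈ Ω', DifferentiableAt ℝ (fun y' => c x y') y ∧
        ‖fderiv ℝ (fun y' => c x y') y‖₊ ≤ C) := by
  obtain ⟨U, hU, hsub, hc⟩ := hA0
  have hK : IsCompact (closure Ω ×ˢ closure Ω') := hb.isCompact_closure.prod hb'.isCompact_closure
  have hsub' : Ω ×ˢ Ω' ⊆ closure Ω ×ˢ closure Ω' := prod_mono subset_closure subset_closure
  obtain ⟨M, hM⟩ := hK.exists_bound_of_continuousOn (hc.continuousOn.mono hsub)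
  obtain ⟨C, hC⟩ := hK.exists_bound_of_continuousOn
    ((hc.continuousOn_fderiv_of_isOpen hU (by norm_num)).mono hsub)
  have hd : ∀ x ∈ Ω, ∀ y ∈ Ω', HasFDerivAt (fun p : Euc n × Euc n => c p.1 p.2)
      (fderiv ℝ (fun p : Euc n × Euc n => c p.1 p.2) (x, y)) (x, y) := fun x hx y hy =>
    ((hc.differentiableOn (by norm_num)).differentiableAt
      (hU.mem_nhds (hsub (hsub' ⟨hx, hy⟩)))).hasFDerivAt
  refine ⟨M, C.toNNReal, fun x hx y hy => hM (x, y) (hsub' ⟨hx, hy⟩),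
    hc.continuousOn.mono (hsub'.trans hsub), fun x hx y hy => ?_, fun x hx y hy => ?_⟩
  · have h1 : HasFDerivAt (fun x' => c x' y)
        ((fderiv ℝ (fun p : Euc n × Euc n => c p.1 p.2) (x, y)).comp
          (ContinuousLinearMap.inl ℝ (Euc n) (Euc n))) x :=
      HasFDerivAt.comp (𝕜 := ℝ) (g := fun p : Euc n × Euc n => c p.1 p.2) x (hd x hx y hy) (hasFDerivAt_prodMk_left x y)
    refine ⟨h1.differentiableAt, ?_⟩
    rw [h1.fderiv, ← NNReal.coe_le_coe]
    refine le_trans ?_ (Real.le_coe_toNNReal C)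
    refine le_trans (ContinuousLinearMap.opNorm_comp_le _ _) ?_
    exact (mul_le_of_le_one_right (norm_nonneg _) (ContinuousLinearMap.norm_inl_le_one ℝ _ _)).trans
      (hC (x, y) (hsub' ⟨hx, hy⟩))
  · have h1 : HasFDerivAt (fun y' => c x y')
        ((fderiv ℝ (fun p : Euc n × Euc n => c p.1 p.2) (x, y)).comp
          (ContinuousLinearMap.inr ℝ (Euc n) (Euc n))) y :=
      HasFDerivAt.comp (𝕜 := ℝ) (g := fun p : Euc n × Euc n => c p.1 p.2) y (hd x hx y hy) (hasFDerivAt_prodMk_right x y)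
    refine ⟨h1.differentiableAt, ?_⟩
    rw [h1.fderiv, ← NNReal.coe_le_coe]
    refine le_trans ?_ (Real.le_coe_toNNReal C)
    refine le_trans (ContinuousLinearMap.opNorm_comp_le _ _) ?_
    exact (mul_le_of_le_one_right (norm_nonneg _) (ContinuousLinearMap.norm_inr_le_one ℝ _ _)).trans
      (hC (x, y) (hsub' ⟨hx, hy⟩))

lemma aux_contact {n : ℕ} {Ω Ω' : Set (Euc n)} (hΩo : IsOpen Ω) {c : Euc n → Euc n → ℝ}
    {φ : Euc n → ℝ} {x y : Euc n} (hx : x ∈ Ω)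
    (hge : ∀ x' ∈ Ω, 0 ≤ φ x' + ctransform c Ω φ y + c x' y)
    (heq : φ x + ctransform c Ω φ y + c x y = 0)
    (hφ : DifferentiableAt ℝ φ x) (hc : DifferentiableAt ℝ (fun x' => c x' y) x) :
    fderiv ℝ φ x = - fderiv ℝ (fun x' => c x' y) x := by
  have hmin : IsLocalMin (fun x' => φ x' + c x' y) x := by
    filter_upwards [hΩo.mem_nhds hx] with x' hx'
    have := hge x' hx'
    linarith
  have h := hmin.fderiv_eq_zero
  rw [fderiv_fun_add hφ hc] at h
  exact eq_neg_of_add_eq_zero_left h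

/-- uniqueness of the c-convex potential. If μ has strictly positive density
a.e. on the connected domain Ω, π is an optimal coupling concentrated on the contact graph
of a c-convex φ̄, and φ is c-convex with ∫(φ(x)+φᶜ(y)+c(x,y)) dπ = 0, then φ − φ̄ is
constant on Ω. -/
theorem stmt_7 {n : ℕ} (Ω Ω' : Set (Euc n))
    (hΩo : IsOpen Ω) (hΩb : IsBounded Ω) (hΩc : IsConnected Ω)
    (hΩ'o : IsOpen Ω') (hΩ'b : IsBounded Ω') (hΩ'c : IsConnected Ω')
    (c : Euc n → Euc n → ℝ) (hA0 : CondA0 c Ω Ω')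
    (μ ν : Measure (Euc n))
    (hμ : IsProbabilityMeasure μ) (hν : IsProbabilityMeasure ν)
    (hμΩ : μ Ωᶜ = 0) (hνΩ' : ν Ω'ᶜ = 0)
    (hac : μ ≪ volume)
    (hpos : ∀ᵐ x ∂volume.restrict Ω, 0 < μ.rnDeriv volume x)
    (π : Measure (Euc n × Euc n)) (hπ : IsProbabilityMeasure π)
    (hπ1 : π.map Prod.fst = μ) (hπ2 : π.map Prod.snd = ν)
    (φbar : Euc n → ℝ) (hφbar : CConvexOn c Ω Ω' φbar)
    (hconc : π {q : Euc n × Euc n |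
      ¬(q.1 ∈ Ω ∧ q.2 ∈ Ω' ∧ φbar q.1 + ctransform c Ω φbar q.2 = -c q.1 q.2)} = 0)
    (φ : Euc n → ℝ) (hφ : CConvexOn c Ω Ω' φ)
    (hint : ∫ q : Euc n × Euc n, (φ q.1 + ctransform c Ω φ q.2 + c q.1 q.2) ∂π = 0) :
    ∃ k : ℝ, ∀ x ∈ Ω, φ x - φbar x = k := by
  obtain ⟨M, C, hM, hcc, hdx, hdy⟩ := aux_cost hΩb hΩ'b hA0
  -- Lipschitz on balls
  have hLx : ∀ x₀ r, ball x₀ r ⊆ Ω → ∀ y ∈ Ω', LipschitzOnWith C (fun x => c x y) (ball x₀ r) :=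
    fun x₀ r hs y hy => (convex_ball x₀ r).lipschitzOnWith_of_nnnorm_fderiv_le
      (fun x hx => (hdx x (hs hx) y hy).1) (fun x hx => (hdx x (hs hx) y hy).2)
  have hLy : ∀ y₀ r, ball y₀ r ⊆ Ω' → ∀ x ∈ Ω, LipschitzOnWith C (fun y => c x y) (ball y₀ r) :=
    fun y₀ r hs x hx => (convex_ball y₀ r).lipschitzOnWith_of_nnnorm_fderiv_le
      (fun y hy => (hdy x hx y (hs hy)).1) (fun y hy => (hdy x hx y (hs hy)).2)
  have key : ∀ f : Euc n → ℝ, CConvexOn c Ω Ω' f →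
      (∃ R, ∀ x ∈ Ω, |f x| ≤ R) ∧
      ∀ x₀ r, ball x₀ r ⊆ Ω → LipschitzOnWith C f (ball x₀ r) := by
    rintro f ⟨ψ, -, hf⟩
    have := aux_sup hΩ'c.nonempty c hM ψ f hf
    exact ⟨this.1, fun x₀ r hs => this.2 C _ hs (hLx x₀ r hs)⟩
  have key2 : ∀ f : Euc n → ℝ, (∃ R, ∀ y ∈ Ω', |ctransform c Ω f y| ≤ R) ∧
      ∀ y₀ r, ball y₀ r ⊆ Ω' → LipschitzOnWith C (ctransform c Ω f) (ball y₀ r) := by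
    intro f
    have := aux_sup hΩc.nonempty (fun y x => c x y) (fun y hy x hx => hM x hx y hy) f
      (ctransform c Ω f) (A := Ω') (fun y _ => rfl)
    exact ⟨this.1, fun y₀ r hs => this.2 C _ hs (hLy y₀ r hs)⟩
  have key3 : ∀ f : Euc n → ℝ, CConvexOn c Ω Ω' f → ∀ x ∈ Ω, ∀ y ∈ Ω',
      0 ≤ f x + ctransform c Ω f y + c x y := by
    intro f hf x hx y hy
    obtain ⟨R, hR⟩ := (key f hf).1
    have : -c x y - f x ≤ ctransform c Ω f y := by
      refine le_csSup ⟨M + R, ?_⟩ (mem_image_of_mem (fun x => -c x y - f x) hx)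
      rintro _ ⟨z, hz, rfl⟩
      have := abs_le.1 (hM z hz y hy)
      have := abs_le.1 (hR z hz)
      simp only; linarith
    linarith
  have contOn : ∀ (A : Set (Euc n)) (f : Euc n → ℝ), IsOpen A →
      (∀ x₀ r, ball x₀ r ⊆ A → LipschitzOnWith C f (ball x₀ r)) → ContinuousOn f A := by
    intro A f hA hf x hx
    obtain ⟨r, hr, hs⟩ := Metric.isOpen_iff.1 hA x hx
    exact ((hf x r hs).continuousOn.continuousAt (ball_mem_nhds x hr)).continuousWithinAt
  -- equality a.e.
  have hbar : ∀ᵐ q ∂π, q.1 ∈ Ω ∧ q.2 ∈ Ω' ∧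
      φbar q.1 + ctransform c Ω φbar q.2 = -c q.1 q.2 := hconc
  have hmem : ∀ᵐ q ∂π, q ∈ Ω ×ˢ Ω' := by
    filter_upwards [hbar] with q hq using ⟨hq.1, hq.2.1⟩
  have hrestr : π.restrict (Ω ×ˢ Ω') = π := Measure.restrict_eq_self_of_ae_mem hmem
  have hmeas : AEStronglyMeasurable
      (fun q : Euc n × Euc n => φ q.1 + ctransform c Ω φ q.2 + c q.1 q.2) π := by
    rw [← hrestr]
    refine ContinuousOn.aestronglyMeasurable ?_ (hΩo.prod hΩ'o).measurableSet
    refine ((ContinuousOn.comp (contOn Ω φ hΩo (key φ hφ).2) continuousOn_fst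
      (fun q hq => hq.1)).add (ContinuousOn.comp (contOn Ω' _ hΩ'o (key2 φ).2) continuousOn_snd
      (fun q hq => hq.2))).add hcc
  have hφeq : ∀ᵐ q ∂π, φ q.1 + ctransform c Ω φ q.2 + c q.1 q.2 = 0 := by
    obtain ⟨R, hR⟩ := (key φ hφ).1
    obtain ⟨R', hR'⟩ := (key2 φ).1
    have hi : Integrable
        (fun q : Euc n × Euc n => φ q.1 + ctransform c Ω φ q.2 + c q.1 q.2) π := by
      refine Integrable.of_bound hmeas (R + R' + M) ?_
      filter_upwards [hmem] with q hq
      rw [Real.norm_eq_abs]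
      exact (abs_add_three _ _ _).trans
        (add_le_add (add_le_add (hR _ hq.1) (hR' _ hq.2)) (hM _ hq.1 _ hq.2))
    refine (integral_eq_zero_iff_of_nonneg_ae ?_ hi).1 hint
    filter_upwards [hmem] with q hq using key3 φ hφ _ hq.1 _ hq.2
  -- local constancy
  have hball : ∀ x₀ r, 0 < r → ball x₀ r ⊆ Ω → ∀ x ∈ ball x₀ r,
      φ x - φbar x = φ x₀ - φbar x₀ := by
    intro x₀ r hr hs
    have hL1 := (key φ hφ).2 x₀ r hs
    have hL2 := (key φbar hφbar).2 x₀ r hs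
    refine aux_const_ball (h := fun x => φ x - φbar x) hr (hL1.sub hL2) ?_
    set T : Set (Euc n) := {y | DifferentiableAt ℝ (fun x => φ x - φbar x) y ∧
      fderiv ℝ (fun x => φ x - φbar x) y = 0} with hT
    have hTm : MeasurableSet T :=
      (measurableSet_of_differentiableAt ℝ _).inter
        (measurable_fderiv ℝ (fun x => φ x - φbar x) (measurableSet_singleton 0))
    have hdiff : ∀ f : Euc n → ℝ, LipschitzOnWith C f (ball x₀ r) →
        ∀ᵐ q ∂π, q.1 ∈ ball x₀ r → DifferentiableAt ℝ f q.1 := by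
      intro f hf
      have h1 : ∀ᵐ x ∂(volume : Measure (Euc n)), x ∈ ball x₀ r → DifferentiableAt ℝ f x := by
        filter_upwards [hf.ae_differentiableWithinAt_of_mem (μ := volume)] with x hx hxb
        exact (hx hxb).differentiableAt (isOpen_ball.mem_nhds hxb)
      have h2 : ∀ᵐ x ∂(π.map Prod.fst), x ∈ ball x₀ r → DifferentiableAt ℝ f x := by
        rw [hπ1]; exact hac.ae_le h1
      exact ae_of_ae_map measurable_fst.aemeasurable h2
    have hS : MeasurableSet {x | x ∈ ball x₀ r → x ∈ T} := by
      have : {x | x ∈ ball x₀ r → x ∈ T} = (ball x₀ r)ᶜ ∪ T := by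
        ext y; simp only [mem_ofPred_eq, mem_union, mem_compl_iff]; tauto
      rw [this]; exact measurableSet_ball.compl.union hTm
    have hμae : ∀ᵐ x ∂μ, x ∈ ball x₀ r → x ∈ T := by
      rw [← hπ1, ae_map_iff measurable_fst.aemeasurable hS]
      filter_upwards [hdiff φ hL1, hdiff φbar hL2, hφeq, hbar] with q h1 h2 h3 h4 hq
      have hd := (hdx _ h4.1 _ h4.2.1).1
      have e1 := aux_contact (Ω' := Ω') hΩo h4.1 (fun x' hx' => key3 φ hφ x' hx' _ h4.2.1) h3 (h1 hq) hd
      have e2 := aux_contact (Ω' := Ω') hΩo h4.1 (fun x' hx' => key3 φbar hφbar x' hx' _ h4.2.1)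
        (by linarith [h4.2.2]) (h2 hq) hd
      refine ⟨(h1 hq).sub (h2 hq), ?_⟩
      rw [fderiv_fun_sub (h1 hq) (h2 hq), e1, e2, sub_self]
    rw [← Measure.withDensity_rnDeriv_eq μ volume hac,
      ae_withDensity_iff (Measure.measurable_rnDeriv μ volume)] at hμae
    rw [ae_restrict_iff' hΩo.measurableSet] at hpos
    filter_upwards [hμae, hpos] with x h1 h2 hx
    exact h1 (h2 (hs hx)).ne' hx
  have hloc : ∀ x ∈ Ω, HasFDerivAt (fun x => φ x - φbar x) (0 : Euc n →L[ℝ] ℝ) x := by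
    intro x hx
    obtain ⟨r, hr, hs⟩ := Metric.isOpen_iff.1 hΩo x hx
    refine (hasFDerivAt_const (φ x - φbar x) x).congr_of_eventuallyEq ?_
    filter_upwards [ball_mem_nhds x hr] with z hz using hball x r hr hs z hz
  exact hΩo.exists_is_const_of_fderiv_eq_zero (𝕜 := ℝ) hΩc.isPreconnected
    (fun x hx => (hloc x hx).differentiableAt.differentiableWithinAt)
    (fun x hx => (hloc x hx).fderiv)
end

section
/- For every n ≥ 1 there exist a probability measure μ₀ on ℝⁿ, a real number p > n, and a constant C > 0 such that μ₀(B_ε(x)) ≤ C ε^{n(1−1/p)} for all ε > 0 and all x ∈ ℝⁿ, and yet μ₀ is not absolutely continuous with respect to Lebesgue measure. (For instance, one may take μ₀ proportional to the product of (n−1)-dimensional Lebesgue measure on [0,1]^{n−1} with the Cantor–Lebesgue measure, the Stieltjes measure of the Devil's staircase, on [0,1].) -/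
open Set Filter Topology MeasureTheory Metric Bornology
open scoped RealInnerProductSpace ENNReal NNReal Topology

/-- First binary digit of the fractional part. -/
noncomputable def cdig (x : ℝ) : ℝ := if Int.fract x < 1 / 2 then 0 else 1

/-- Binary digits read in base four. -/
noncomputable def cfun (x : ℝ) : ℝ := ∑' k : ℕ, cdig (2 ^ k * x) * (1 / 4) ^ k

lemma cdig_nonneg (x : ℝ) : 0 ≤ cdig x := by unfold cdig; split_ifs <;> norm_num
lemma cdig_le (x : ℝ) : cdig x ≤ 1 := by unfold cdig; split_ifs <;> norm_num

lemma cfun_summable (x : ℝ) : Summable fun k : ℕ => cdig (2 ^ k * x) * (1 / 4 : ℝ) ^ k := by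
  refine Summable.of_nonneg_of_le (fun k => mul_nonneg (cdig_nonneg _) (by positivity))
    (fun k => ?_) (summable_geometric_of_lt_one (r := (1 / 4 : ℝ)) (by norm_num) (by norm_num))
  exact mul_le_of_le_one_left (by positivity) (cdig_le _)

lemma cfun_nonneg (x : ℝ) : 0 ≤ cfun x :=
  tsum_nonneg fun k => mul_nonneg (cdig_nonneg _) (by positivity)

lemma cfun_le (x : ℝ) : cfun x ≤ 4 / 3 := by
  have h : cfun x ≤ ∑' k : ℕ, (1 / 4 : ℝ) ^ k :=
    (cfun_summable x).tsum_le_tsum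
      (fun k => mul_le_of_le_one_left (by positivity) (cdig_le _))
      (summable_geometric_of_lt_one (by norm_num) (by norm_num))
  rw [tsum_geometric_of_lt_one (by norm_num) (by norm_num)] at h
  norm_num at h ⊢
  exact h

lemma cfun_eq (x : ℝ) : cfun x = cdig x + cfun (2 * x) / 4 := by
  unfold cfun
  rw [(cfun_summable x).tsum_eq_zero_add, ← tsum_div_const]
  congr 1
  · simp
  · congr 1
    ext k
    rw [pow_succ, pow_succ, mul_assoc]
    ring

lemma cfun_sub_one (x : ℝ) : cfun (x - 1) = cfun x := by
  unfold cfun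
  congr 1
  ext k
  have : (2 : ℝ) ^ k * (x - 1) = 2 ^ k * x - ((2 ^ k : ℕ) : ℝ) := by push_cast; ring
  unfold cdig
  rw [this, Int.fract_sub_natCast]

lemma cfun_low {x : ℝ} (h0 : 0 ≤ x) (h1 : x < 1 / 2) : cfun x = cfun (2 * x) / 4 := by
  rw [cfun_eq x, cdig, Int.fract_eq_self.2 ⟨h0, by linarith⟩, if_pos h1, zero_add]

lemma cfun_high {x : ℝ} (h0 : 1 / 2 ≤ x) (h1 : x < 1) : cfun x = 1 + cfun (2 * x - 1) / 4 := by
  rw [cfun_eq x, cdig, Int.fract_eq_self.2 ⟨by linarith, h1⟩, if_neg (not_lt.2 h0), cfun_sub_one]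

lemma cfun_gap (m : ℕ) : ∀ s t : ℝ, 0 ≤ s → t < 1 → (1 / 2) ^ m ≤ t - s →
    2 / 3 * (1 / 4) ^ m ≤ cfun t - cfun s := by
  induction m with
  | zero => intro s t hs ht h; simp at h; linarith
  | succ m ih =>
    intro s t hs ht h
    have hp : (0 : ℝ) < (1 / 2) ^ (m + 1) := by positivity
    have hst : s < t := by linarith
    rw [pow_succ] at h
    rw [pow_succ]
    rcases lt_or_ge t (1 / 2) with h2 | h2
    · have := ih (2 * s) (2 * t) (by linarith) (by linarith) (by linarith)
      rw [cfun_low hs (by linarith), cfun_low (by linarith) h2]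
      linarith
    · rcases lt_or_ge s (1 / 2) with h3 | h3
      · rw [cfun_low hs h3, cfun_high h2 ht]
        have a := cfun_nonneg (2 * t - 1)
        have b := cfun_le (2 * s)
        have c : (1 / 4 : ℝ) ^ m ≤ 1 := pow_le_one₀ (by norm_num) (by norm_num)
        linarith
      · have := ih (2 * s - 1) (2 * t - 1) (by linarith) (by linarith) (by linarith)
        rw [cfun_high h3 (by linarith), cfun_high h2 ht]
        linarith

lemma cfun_sq {s t : ℝ} (hs : 0 ≤ s) (ht : t < 1) (hst : s < t) :
    (t - s) ^ 2 ≤ 6 * (cfun t - cfun s) := by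
  obtain ⟨m, h1, h2⟩ := exists_nat_pow_near_of_lt_one (x := t - s) (y := (1 / 2 : ℝ))
    (by linarith) (by linarith) (by norm_num) (by norm_num)
  have := cfun_gap (m + 1) s t hs ht h1.le
  have h3 : (t - s) ^ 2 ≤ ((1 / 2) ^ m) ^ 2 := by
    apply pow_le_pow_left₀ (by linarith) h2
  have h4 : ((1 / 2 : ℝ) ^ m) ^ 2 = (1 / 4) ^ m := by
    rw [← pow_mul, mul_comm, pow_mul]; norm_num
  rw [pow_succ] at this
  linarith

lemma cfun_mono : MonotoneOn cfun (Ico 0 1) := by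
  intro s hs t ht hst
  rcases hst.eq_or_lt with h | h
  · rw [h]
  · have := cfun_sq hs.1 ht.2 h
    nlinarith [sq_nonneg (t - s)]

lemma cfun_range_null : volume (cfun '' Ico 0 1) = 0 := by
  set R := cfun '' Ico (0 : ℝ) 1 with hR
  have hfin : volume R ≠ ∞ := by
    refine ne_top_of_le_ne_top (measure_Icc_lt_top (a := (0 : ℝ)) (b := 4 / 3)).ne
      (measure_mono ?_)
    rintro _ ⟨x, -, rfl⟩
    exact ⟨cfun_nonneg x, cfun_le x⟩
  set Q := (fun x : ℝ => (1 / 4 : ℝ) * x) '' R with hQ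
  have hQv : volume Q = ENNReal.ofReal (1 / 4) * volume R := by
    have := Measure.addHaar_smul (volume : Measure ℝ) (1 / 4 : ℝ) R
    rw [Module.finrank_self, pow_one, abs_of_pos (by norm_num : (0 : ℝ) < 1 / 4)] at this
    exact this
  have hsub : R ⊆ Q ∪ (fun x : ℝ => 1 + x) '' Q := by
    rintro _ ⟨x, hx, rfl⟩
    rcases lt_or_ge x (1 / 2) with h | h
    · left
      exact ⟨_, ⟨2 * x, ⟨by linarith [hx.1], by linarith⟩, rfl⟩, by
        rw [cfun_low hx.1 h]; ring⟩
    · right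
      exact ⟨_, ⟨_, ⟨2 * x - 1, ⟨by linarith, by linarith [hx.2]⟩, rfl⟩, rfl⟩, by
        rw [cfun_high h hx.2]; ring⟩
  have h1 : volume R ≤ ENNReal.ofReal (1 / 2) * volume R := by
    calc volume R ≤ volume Q + volume ((fun x : ℝ => 1 + x) '' Q) :=
          (measure_mono hsub).trans (measure_union_le _ _)
      _ = volume Q + volume Q := by
          congr 1
          rw [image_add_left, measure_preimage_add]
      _ = _ := by
          rw [hQv, ← add_mul, ← ENNReal.ofReal_add (by norm_num) (by norm_num)]
          norm_num
  have h2 := ENNReal.toReal_mono (by finiteness) h1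
  rw [ENNReal.toReal_mul, ENNReal.toReal_ofReal (by norm_num)] at h2
  have h3 : 0 ≤ (volume R).toReal := ENNReal.toReal_nonneg
  have h4 : (volume R).toReal = 0 := by linarith
  exact (ENNReal.toReal_eq_zero_iff _).1 h4 |>.resolve_right hfin

/-- The Cantor-type measure. -/
noncomputable def cmeas : Measure ℝ := (volume.restrict (Ico (0 : ℝ) 1)).map cfun

lemma cfun_aem : AEMeasurable cfun (volume.restrict (Ico (0 : ℝ) 1)) :=
  aemeasurable_restrict_of_monotoneOn measurableSet_Ico cfun_mono

lemma unif_prob : IsProbabilityMeasure (volume.restrict (Ico (0 : ℝ) 1)) :=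
  ⟨by simp⟩

lemma cmeas_prob : IsProbabilityMeasure cmeas := by
  haveI := unif_prob
  exact Measure.isProbabilityMeasure_map cfun_aem

lemma cmeas_ball (x ε : ℝ) (hε : 0 < ε) :
    cmeas (ball x ε) ≤ ENNReal.ofReal (4 * ε ^ (1 / 2 : ℝ)) := by
  rw [cmeas, Measure.map_apply_of_aemeasurable cfun_aem measurableSet_ball,
    Measure.restrict_apply' measurableSet_Ico]
  refine (Real.volume_le_diam _).trans ?_
  have key : ∀ s t : ℝ, 0 ≤ s → t < 1 → s < t → cfun s ∈ ball x ε → cfun t ∈ ball x ε →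
      t - s ≤ 4 * ε ^ (1 / 2 : ℝ) := by
    intro s t hs ht hst h1 h2
    have h := cfun_sq hs ht hst
    rw [mem_ball, Real.dist_eq, abs_lt] at h1 h2
    rw [← Real.sqrt_eq_rpow]
    refine (sq_le_sq₀ (by linarith) (by positivity)).1 ?_
    rw [mul_pow, Real.sq_sqrt hε.le]
    linarith
  apply Metric.ediam_le
  rintro s ⟨hs, hs'⟩ t ⟨ht, ht'⟩
  rw [edist_dist]
  apply ENNReal.ofReal_le_ofReal
  rw [Real.dist_eq]
  rcases lt_trichotomy s t with h | h | h
  · rw [abs_sub_comm, abs_of_pos (by linarith)]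
    exact key s t hs'.1 ht'.2 h hs ht
  · rw [h, sub_self, abs_zero]; positivity
  · rw [abs_of_pos (by linarith)]
    exact key t s ht'.1 hs'.2 h ht hs

/-- The factors of the product measure. -/
noncomputable def cfac (m : ℕ) : Fin (m + 1) → Measure ℝ :=
  Fin.cons cmeas fun _ => volume.restrict (Ico (0 : ℝ) 1)

lemma cfac_prob (m : ℕ) (i : Fin (m + 1)) : IsProbabilityMeasure (cfac m i) := by
  refine Fin.cases ?_ (fun j => ?_) i
  · exact cmeas_prob
  · exact unif_prob

/-- for every n ≥ 1 there exists a probability measure on ℝⁿ satisfying the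
(Lp) condition for some p > n while not being absolutely continuous with respect to
Lebesgue measure. -/
theorem stmt_16 (n : ℕ) (hn : 1 ≤ n) :
    ∃ (μ₀ : Measure (Euc n)) (p C : ℝ),
      IsProbabilityMeasure μ₀ ∧ (n : ℝ) < p ∧ 0 < C ∧
      (∀ ε > (0:ℝ), ∀ x : Euc n,
        μ₀ (ball x ε) ≤ ENNReal.ofReal (C * ε ^ ((n : ℝ) * (1 - 1 / p)))) ∧
      ¬ μ₀ ≪ (volume : Measure (Euc n)) := by
  obtain ⟨m, rfl⟩ : ∃ m, n = m + 1 := ⟨n - 1, by omega⟩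
  haveI := cfac_prob m
  have hmeas : Measurable (WithLp.toLp 2 : (Fin (m + 1) → ℝ) → Euc (m + 1)) :=
    (EuclideanSpace.volume_preserving_symm_measurableEquiv_toLp (Fin (m+1))).symm.measurable
  have hvol : MeasurePreserving (WithLp.toLp 2 : (Fin (m + 1) → ℝ) → Euc (m + 1)) :=
    (EuclideanSpace.volume_preserving_symm_measurableEquiv_toLp (Fin (m+1))).symm
  refine ⟨(Measure.pi (cfac m)).map (WithLp.toLp 2), 2 * ((m + 1 : ℕ) : ℝ), 4 * 2 ^ m,
    Measure.isProbabilityMeasure_map hmeas.aemeasurable, ?_, by positivity, ?_, ?_⟩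
  · push_cast; linarith [(Nat.cast_nonneg m : (0 : ℝ) ≤ m)]
  · intro ε hε x
    rw [Measure.map_apply hmeas measurableSet_ball]
    have hsub : (WithLp.toLp 2 : (Fin (m + 1) → ℝ) → Euc (m + 1)) ⁻¹' ball x ε ⊆
        Set.pi univ fun i => ball (x i) ε := by
      intro y hy i _
      rw [mem_preimage, mem_ball, dist_eq_norm] at hy
      rw [mem_ball, dist_eq_norm]
      exact (PiLp.norm_apply_le (WithLp.toLp 2 y - x) i).trans_lt hy
    refine (measure_mono hsub).trans ?_
    rw [Measure.pi_pi, Fin.prod_univ_succ]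
    have h0 : cfac m 0 (ball (x 0) ε) ≤ ENNReal.ofReal (4 * ε ^ (1 / 2 : ℝ)) :=
      cmeas_ball _ _ hε
    have h1 : ∀ j : Fin m, cfac m j.succ (ball (x j.succ) ε) ≤ ENNReal.ofReal (2 * ε) := by
      intro j
      refine (Measure.restrict_apply_le _ _).trans ?_
      rw [Real.volume_ball]
    refine (mul_le_mul' h0 (Finset.prod_le_prod' fun j _ => h1 j)).trans ?_
    rw [Finset.prod_const, Finset.card_univ, Fintype.card_fin,
      ← ENNReal.ofReal_pow (by positivity), ← ENNReal.ofReal_mul (by positivity)]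
    apply le_of_eq
    congr 1
    have he : ((m + 1 : ℕ) : ℝ) * (1 - 1 / (2 * ((m + 1 : ℕ) : ℝ))) = 1 / 2 + (m : ℝ) := by
      push_cast
      have : (m : ℝ) + 1 ≠ 0 := by positivity
      field_simp
      ring
    rw [he, Real.rpow_add hε, Real.rpow_natCast]
    ring
  · intro hac
    set N := toMeasurable volume (cfun '' Ico (0 : ℝ) 1) with hN
    have hNm : MeasurableSet N := measurableSet_toMeasurable _ _
    have hN0 : volume N = 0 := by rw [hN, measure_toMeasurable, cfun_range_null]
    have hS : MeasurableSet ((fun y : Euc (m + 1) => y 0) ⁻¹' N) :=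
      hNm.preimage (by fun_prop)
    have h1 : volume ((fun y : Euc (m + 1) => y 0) ⁻¹' N) = 0 := by
      rw [← hvol.measure_preimage hS.nullMeasurableSet]
      exact Measure.pi_eval_preimage_null (fun _ : Fin (m + 1) => (volume : Measure ℝ))
        (i := 0) hN0
    have h2 := hac h1
    rw [Measure.map_apply hmeas hS] at h2
    have h3 : cfac m 0 Nᶜ = 0 := by
      change cmeas Nᶜ = 0
      rw [cmeas, Measure.map_apply_of_aemeasurable cfun_aem hNm.compl,
        Measure.restrict_apply' measurableSet_Ico]
      convert measure_empty (μ := (volume : Measure ℝ))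
      ext t
      simp only [mem_inter_iff, mem_preimage, mem_compl_iff, mem_empty_iff_false, iff_false]
      rintro ⟨h, h'⟩
      exact h (subset_toMeasurable _ _ ⟨t, h', rfl⟩)
    have h4 := Measure.pi_eval_preimage_null (cfac m) (i := 0) h3
    have h5 : Measure.pi (cfac m) univ = 0 := by
      refine measure_mono_null ?_ (measure_union_null h2 h4)
      intro y _
      by_cases hy : y 0 ∈ N
      · left; exact hy
      · right; exact hy
    rw [measure_univ] at h5
    exact one_ne_zero h5
end

section
/- For every r ∈ [0, π], one has r·sin(2r) + 3·cos(2r) + 4r² − 3 ≥ 0. Equivalently, 2(r² − r sin r cos r) − 3(sin²r − r sin r cos r) ≥ 0 on [0, π]. -/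
open Set Real

theorem nonneg_of_deriv_aux (f g : ℝ → ℝ) (h0 : f 0 = 0)
    (hd : ∀ x, HasDerivAt f (g x) x) (hg : ∀ x ∈ Icc (0:ℝ) π, 0 ≤ g x) :
    ∀ x ∈ Icc (0:ℝ) π, 0 ≤ f x := by
  have hm : MonotoneOn f (Icc (0:ℝ) π) := by
    apply monotoneOn_of_deriv_nonneg (convex_Icc 0 π)
    · exact fun x _ => (hd x).continuousAt.continuousWithinAt
    · exact fun x _ => (hd x).differentiableAt.differentiableWithinAt
    · intro x hx
      rw [(hd x).deriv]
      exact hg x (interior_subset hx)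
  intro x hx
  have := hm ⟨le_refl 0, pi_pos.le⟩ hx hx.1
  rwa [h0] at this

/-- for r ∈ [0, π], r sin(2r) + 3 cos(2r) + 4r² − 3 ≥ 0; equivalently
2(r² − r sin r cos r) − 3(sin²r − r sin r cos r) ≥ 0. -/
theorem stmt_18 :
    ∀ r ∈ Icc (0:ℝ) π,
      0 ≤ r * Real.sin (2 * r) + 3 * Real.cos (2 * r) + 4 * r ^ 2 - 3 ∧
      0 ≤ 2 * (r ^ 2 - r * Real.sin r * Real.cos r)
          - 3 * ((Real.sin r) ^ 2 - r * Real.sin r * Real.cos r) := by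
  have h1 := nonneg_of_deriv_aux (fun x => sin x - x * cos x) (fun x => x * sin x) (by simp)
    (fun x => by
      refine HasDerivAt.congr_deriv ((hasDerivAt_sin x).sub ((hasDerivAt_id x).mul (hasDerivAt_cos x))) ?_
      simp only [id]
      ring)
    (fun x hx => mul_nonneg hx.1 (sin_nonneg_of_mem_Icc hx))
  have h2 := nonneg_of_deriv_aux
    (fun x => 4 * x - 5 * (sin x * cos x) + x * (cos x * cos x - sin x * sin x))
    (fun x => 4 * sin x * (2 * sin x - x * cos x)) (by simp)
    (fun x => by
      have hs := hasDerivAt_sin x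
      have hc := hasDerivAt_cos x
      have hi := hasDerivAt_id x
      refine HasDerivAt.congr_deriv (((hi.const_mul 4).sub ((hs.mul hc).const_mul 5)).add
        (hi.mul ((hc.mul hc).sub (hs.mul hs)))) ?_
      try simp only [id, Pi.sub_apply, Pi.mul_apply]
      linear_combination (-4) * sin_sq_add_cos_sq x)
    (fun x hx => by
      have h := h1 x hx
      have hs := sin_nonneg_of_mem_Icc hx
      exact mul_nonneg (by positivity) (by linarith))
  have h3 := nonneg_of_deriv_aux
    (fun x => 2 * (x * x) + x * (sin x * cos x) - 3 * (sin x * sin x))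
    (fun x => 4 * x - 5 * (sin x * cos x) + x * (cos x * cos x - sin x * sin x)) (by simp)
    (fun x => by
      have hs := hasDerivAt_sin x
      have hc := hasDerivAt_cos x
      have hi := hasDerivAt_id x
      refine HasDerivAt.congr_deriv ((((hi.mul hi).const_mul 2).add (hi.mul (hs.mul hc))).sub
        ((hs.mul hs).const_mul 3)) ?_
      try simp only [id, Pi.sub_apply, Pi.mul_apply]
      ring) h2
  intro r hr
  have h := h3 r hr
  constructor
  · rw [sin_two_mul, cos_two_mul, cos_sq']
    linarith
  · linarith
end

section
/- There exists a universal constant C₀ > 0 with the following property. Let m ≥ 2 and let α, β, v ∈ ℝ^m satisfy |v| = 1, v·β = 0, α·β = 0 and β ≠ 0. Set c := α·v, r(t) := |α + tβ|, and F(t) := (1 − r(t)·cos r(t)/sin r(t))·(1 − c²/r(t)²). Then for every t with 0 < r(t) < π, F is twice differentiable at t and F''(t) ≥ C₀ |β|². (This is the analytic core of the fact that the squared Riemannian distance on the round sphere satisfies the strict cost-curvature condition As.) -/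
open Set Real
open scoped RealInnerProductSpace

noncomputable section

/-- The function F(t) = (1 − r cos r / sin r)(1 − c²/r²) with r = |α + tβ| and c = α·v,
arising in the verification of condition As for the squared distance on the sphere. -/
noncomputable def sphereF {m : ℕ} (α β v : EuclideanSpace ℝ (Fin m)) (t : ℝ) : ℝ :=
  (1 - ‖α + t • β‖ * Real.cos ‖α + t • β‖ / Real.sin ‖α + t • β‖) *
    (1 - (⟪α, v⟫) ^ 2 / ‖α + t • β‖ ^ 2)

end

/-- `k(s) = (1 - √s cot √s)/s`. -/
noncomputable def kfun (s : ℝ) : ℝ := (1 - √s * Real.cos √s / Real.sin √s) / s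

lemma sqrt_mem_aux {s : ℝ} (hs : s ∈ Ioo (0:ℝ) (π ^ 2)) : 0 < √s ∧ √s < π :=
  ⟨Real.sqrt_pos.2 hs.1, (Real.sqrt_lt' Real.pi_pos).2 hs.2⟩

lemma den_pos_aux {s : ℝ} (hs : s ∈ Ioo (0:ℝ) (π ^ 2)) (n : ℕ) :
    0 < π ^ 2 * ((n:ℝ) + 1) ^ 2 - s := by
  have h1 : (1:ℝ) ≤ ((n:ℝ) + 1) ^ 2 := by
    have : (0:ℝ) ≤ n := n.cast_nonneg
    nlinarith
  have := mul_le_mul_of_nonneg_left h1 (sq_nonneg π)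
  linarith [hs.2]

lemma kfun_hasSum {s : ℝ} (hs : s ∈ Ioo (0:ℝ) (π ^ 2)) :
    HasSum (fun n : ℕ => 2 / (π ^ 2 * ((n:ℝ) + 1) ^ 2 - s)) (kfun s) := by
  obtain ⟨h0, h1⟩ := sqrt_mem_aux hs
  have hsq : √s ^ 2 = s := Real.sq_sqrt hs.1.le
  unfold kfun
  generalize hr : √s = r at *
  subst hsq
  have hpi := Real.pi_pos
  have hz0 : 0 < r / π := by positivity
  have hz1 : r / π < 1 := by rwa [div_lt_one hpi]
  have hz : ((r / π : ℝ) : ℂ) ∈ Complex.integerComplement := by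
    rintro ⟨j, hj⟩
    have hj' : (j : ℝ) = r / π := by exact_mod_cast hj
    rw [← hj'] at hz0 hz1
    have a : 0 < j := by exact_mod_cast hz0
    have b : j < 1 := by exact_mod_cast hz1
    omega
  have hS := (Summable.hasSum_iff_tendsto_nat (summable_cotTerm hz)).mpr
    (tendsto_logDeriv_euler_cot_sub hz)
  have hS2 := hS.mul_left ((-(1 / (π * r)) : ℝ) : ℂ)
  rw [← Complex.hasSum_ofReal]
  have hsin : Real.sin r ≠ 0 := (Real.sin_pos_of_pos_of_lt_pi h0 h1).ne'
  convert hS2 using 1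
  · rfl
  · funext n
    simp only [cotTerm]
    norm_cast
    rw [Nat.cast_pow]
    have hd := den_pos_aux hs n
    have e1 : r / π - ((n + 1 : ℕ) : ℝ) ≠ 0 := by
      have : (1:ℝ) ≤ ((n + 1 : ℕ) : ℝ) := by exact_mod_cast Nat.succ_le_succ n.zero_le
      linarith
    have e2 : r / π + ((n + 1 : ℕ) : ℝ) ≠ 0 := by positivity
    have e3 : π ^ 2 * ((n + 1 : ℕ) : ℝ) ^ 2 - r ^ 2 ≠ 0 := by
      push_cast; exact hd.ne'
    generalize ((n + 1 : ℕ) : ℝ) = q at *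
    have e4 : r - π * q ≠ 0 := by
      intro h; apply e3; have : r = π * q := by linarith
      rw [this]; ring
    have e5 : r + π * q ≠ 0 := by
      intro h; apply e3; have : r = -(π * q) := by linarith
      rw [this]; ring
    have f1 : r / π - q = (r - π * q) / π := by field_simp
    have f2 : r / π + q = (r + π * q) / π := by field_simp
    have f3 : π ^ 2 * q ^ 2 - r ^ 2 = - ((r - π * q) * (r + π * q)) := by ring
    rw [f1, f2, f3]
    field_simp
    ring
  · have e : (π : ℂ) * ((r / π : ℝ) : ℂ) = (r : ℂ) := by
      have : (π : ℂ) ≠ 0 := by exact_mod_cast hpi.ne'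
      push_cast; field_simp
    rw [e, Complex.cot_eq_cos_div_sin]
    norm_cast
    field_simp
    ring

lemma kfun_mono : MonotoneOn kfun (Ioo (0:ℝ) (π ^ 2)) := by
  intro x hx y hy hxy
  refine hasSum_le (fun n => ?_) (kfun_hasSum hx) (kfun_hasSum hy)
  have := den_pos_aux hy n
  gcongr

lemma term_convex {l a x y p q : ℝ} (hp : 0 ≤ p) (hq : 0 ≤ q) (hpq : p + q = 1)
    (hx : 0 < l - x) (hy : 0 < l - y) (ha : a = p * x + q * y) :
    2 / (l - a) ≤ p * (2 / (l - x)) + q * (2 / (l - y)) := by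
  have e : l - a = p * (l - x) + q * (l - y) := by
    rw [ha]; linear_combination (-l) * hpq
  rw [e]
  generalize l - x = X at *
  generalize l - y = Y at *
  have hD : 0 < p * X + q * Y := by
    rcases hp.eq_or_lt with h | h
    · subst h; have : q = 1 := by linarith
      subst this; simpa using hy
    · have := mul_pos h hx; have := mul_nonneg hq hy.le; linarith
  rw [div_le_iff₀ hD]
  have : (p * (2 / X) + q * (2 / Y)) * (p * X + q * Y) - 2 * (p + q) ^ 2
      = 2 * p * q * (X - Y) ^ 2 / (X * Y) := by
    field_simp; ring
  have h2 : 0 ≤ 2 * p * q * (X - Y) ^ 2 / (X * Y) := by positivity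
  rw [hpq] at this
  linarith

lemma kfun_convex : ConvexOn ℝ (Ioo (0:ℝ) (π ^ 2)) kfun := by
  refine ⟨convex_Ioo _ _, fun x hx y hy p q hp hq hpq => ?_⟩
  have hm := (convex_Ioo (0:ℝ) (π ^ 2)) hx hy hp hq hpq
  refine hasSum_le (fun n => ?_) (kfun_hasSum hm)
    (((kfun_hasSum hx).mul_left p).add ((kfun_hasSum hy).mul_left q))
  exact term_convex hp hq hpq (den_pos_aux hx n) (den_pos_aux hy n) (by simp)

lemma kfun_lower {s : ℝ} (hs : s ∈ Ioo (0:ℝ) (π ^ 2)) : 2 / π ^ 2 ≤ kfun s := by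
  have h := le_hasSum (kfun_hasSum hs) 0 (fun n _ => by
    have := den_pos_aux hs n; positivity)
  refine le_trans ?_ h
  have := den_pos_aux hs 0
  have := hs.1
  apply div_le_div_of_nonneg_left <;> simp_all
  linarith

lemma kfun_contDiffAt {s : ℝ} (hs : s ∈ Ioo (0:ℝ) (π ^ 2)) : ContDiffAt ℝ 2 kfun s := by
  obtain ⟨h0, h1⟩ := sqrt_mem_aux hs
  have hsin : Real.sin √s ≠ 0 := (Real.sin_pos_of_pos_of_lt_pi h0 h1).ne'
  have hq : ContDiffAt ℝ 2 (fun s : ℝ => √s) s := contDiffAt_id.sqrt hs.1.ne'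
  exact (contDiffAt_const.sub ((hq.mul hq.cos).div hq.sin hsin)).div contDiffAt_id hs.1.ne'

lemma kfun_deriv {s : ℝ} (hs : s ∈ Ioo (0:ℝ) (π ^ 2)) : HasDerivAt kfun (deriv kfun s) s :=
  ((kfun_contDiffAt hs).differentiableAt (by norm_num)).hasDerivAt

lemma kfun_deriv2 {s : ℝ} (hs : s ∈ Ioo (0:ℝ) (π ^ 2)) :
    HasDerivAt (deriv kfun) (deriv (deriv kfun) s) s := by
  have h : ContDiffAt ℝ 1 (deriv kfun) s :=
    (kfun_contDiffAt hs).derivWithin (m := 1) (by norm_num)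
  exact (h.differentiableAt (by norm_num)).hasDerivAt

lemma kfun_deriv_nonneg {s : ℝ} (hs : s ∈ Ioo (0:ℝ) (π ^ 2)) : 0 ≤ deriv kfun s := by
  have := kfun_mono.derivWithin_nonneg (x := s) (𝕜 := ℝ)
  rwa [derivWithin_of_isOpen isOpen_Ioo hs] at this

lemma kfun_deriv2_nonneg {s : ℝ} (hs : s ∈ Ioo (0:ℝ) (π ^ 2)) : 0 ≤ deriv (deriv kfun) s := by
  have := (kfun_convex.monotoneOn_deriv
    (fun x hx => (kfun_deriv hx).differentiableAt)).derivWithin_nonneg (x := s) (𝕜 := ℝ)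
  rwa [derivWithin_of_isOpen isOpen_Ioo hs] at this


/-- there is a universal constant C₀ > 0 such that for all m ≥ 2 and all
α, β, v with |v| = 1, v ⟂ β, α ⟂ β, β ≠ 0, the function F is twice differentiable at every
t with 0 < |α + tβ| < π, and F''(t) ≥ C₀|β|². -/
theorem stmt_19 :
    ∃ C₀ : ℝ, 0 < C₀ ∧
      ∀ (m : ℕ), 2 ≤ m → ∀ α β v : EuclideanSpace ℝ (Fin m),
        ‖v‖ = 1 → ⟪v, β⟫ = 0 → ⟪α, β⟫ = 0 → β ≠ 0 →
        ∀ t : ℝ, 0 < ‖α + t • β‖ → ‖α + t • β‖ < π →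
          DifferentiableAt ℝ (sphereF α β v) t ∧
          DifferentiableAt ℝ (deriv (sphereF α β v)) t ∧
          C₀ * ‖β‖ ^ 2 ≤ deriv (deriv (sphereF α β v)) t := by
  refine ⟨4 / π ^ 2, by have := Real.pi_pos; positivity, ?_⟩
  intro m _ α β v hv hvb hab _ t ht0 ht1
  set A := ‖α‖ ^ 2 with hA
  set B := ‖β‖ ^ 2 with hB
  set C := (⟪α, v⟫) ^ 2 with hC
  have hnorm : ∀ u : ℝ, ‖α + u • β‖ ^ 2 = A + u ^ 2 * B := by
    intro u
    rw [norm_add_sq_real, inner_smul_right, hab, norm_smul, mul_pow, Real.norm_eq_abs, sq_abs]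
    ring
  have hCA : C ≤ A := by
    have h := abs_real_inner_le_norm α v
    rw [hv, mul_one] at h
    rw [hC, hA, ← sq_abs]
    gcongr
  have hB0 : 0 ≤ B := by positivity
  let σ : ℝ → ℝ := fun u => A + u ^ 2 * B
  have hσc : Continuous σ := by fun_prop
  have hst : σ t ∈ Ioo (0:ℝ) (π ^ 2) := by
    change A + t ^ 2 * B ∈ _
    rw [← hnorm t]
    exact ⟨by positivity, by gcongr⟩
  have hopen : ∀ᶠ u in nhds t, σ u ∈ Ioo (0:ℝ) (π ^ 2) :=
    hσc.continuousAt.eventually (isOpen_Ioo.mem_nhds hst)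
  have hσ : ∀ u, HasDerivAt σ (2 * u * B) u := by
    intro u
    have := ((hasDerivAt_pow 2 u).mul_const B).const_add A
    exact this.congr_deriv (by norm_num)
  have hF : ∀ᶠ u in nhds t, sphereF α β v u = (σ u - C) * kfun (σ u) := by
    filter_upwards [hopen] with u hu
    have hr : √(σ u) = ‖α + u • β‖ := by
      rw [show σ u = ‖α + u • β‖ ^ 2 from (hnorm u).symm, Real.sqrt_sq (norm_nonneg _)]
    have hs0 : σ u ≠ 0 := hu.1.ne'
    have hs1 : ‖α + u • β‖ ^ 2 = σ u := hnorm u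
    unfold sphereF kfun
    rw [hr, hs1, ← hC]
    field_simp
  have hG : ∀ u, σ u ∈ Ioo (0:ℝ) (π ^ 2) → HasDerivAt (fun u => (σ u - C) * kfun (σ u))
      (2 * u * B * (kfun (σ u) + (σ u - C) * deriv kfun (σ u))) u := by
    intro u hu
    have h := ((hσ u).sub_const C).mul ((kfun_deriv hu).comp u (hσ u))
    refine h.congr_deriv ?_
    simp only [Function.comp]
    ring
  have hd1 : deriv (sphereF α β v) =ᶠ[nhds t]
      fun u => 2 * u * B * (kfun (σ u) + (σ u - C) * deriv kfun (σ u)) := by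
    filter_upwards [hF.eventually_nhds, hopen] with u h1 h2
    rw [Filter.EventuallyEq.deriv_eq h1]
    exact (hG u h2).deriv
  have hd2 : HasDerivAt (fun u => 2 * u * B * (kfun (σ u) + (σ u - C) * deriv kfun (σ u)))
      (2 * B * (kfun (σ t) + (σ t - C) * deriv kfun (σ t)) +
        (2 * t * B) ^ 2 * (2 * deriv kfun (σ t) + (σ t - C) * deriv (deriv kfun) (σ t))) t := by
    have h0 : HasDerivAt (fun u : ℝ => 2 * u * B) (2 * B) t := by
      simpa using ((hasDerivAt_id t).const_mul 2).mul_const B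
    have h := h0.mul (((kfun_deriv hst).comp t (hσ t)).add
      (((hσ t).sub_const C).mul ((kfun_deriv2 hst).comp t (hσ t))))
    refine h.congr_deriv ?_
    simp only [Function.comp, Pi.add_apply, Pi.mul_apply]
    ring
  have hd3 := hd2.congr_of_eventuallyEq hd1
  refine ⟨((hG t hst).congr_of_eventuallyEq hF).differentiableAt, hd3.differentiableAt, ?_⟩
  rw [hd3.deriv]
  have k0 := kfun_lower hst
  have k1 := kfun_deriv_nonneg hst
  have k2 := kfun_deriv2_nonneg hst
  have hsC : 0 ≤ σ t - C := by
    have : 0 ≤ t ^ 2 * B := by positivity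
    change 0 ≤ A + t ^ 2 * B - C
    linarith
  have e1 : 4 / π ^ 2 * B = 2 * B * (2 / π ^ 2) := by ring
  rw [e1]
  have e2 : 2 * B * (2 / π ^ 2) ≤ 2 * B * (kfun (σ t) + (σ t - C) * deriv kfun (σ t)) := by
    gcongr
    have := mul_nonneg hsC k1
    linarith
  have e3 : 0 ≤ (2 * t * B) ^ 2 *
      (2 * deriv kfun (σ t) + (σ t - C) * deriv (deriv kfun) (σ t)) := by positivity
  linarith
end
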